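/- Fix t > 0, l ∈ ℕ, and θ ∈ (0,1]. Let c : [0,t] × ℝˡ → ℝ^{l×l} be measurable with symmetric values satisfying θ|y|² ≤ yᵀc_s(x)y ≤ θ^{-1}|y|² for all s ∈ [0,t], x, y ∈ ℝˡ, such that c_s(·) is of class C¹ for each s with first partial derivatives bounded and Lipschitz continuous in x uniformly over s ∈ [0,t]. Let a : [0,t] × ℝˡ → ℝˡ be measurable, with a_s(·) Lipschitz continuous uniformly over s ∈ [0,t] and sup_{s∈[0,t]} |a_s(0)| < ∞. Let m : [0,t] × ℝˡ → [0,∞) be measurable such that for almost every s, m_s(·) is a probability density on ℝˡ belonging to W^{1,1}_loc(ℝˡ), with ∫₀ᵗ ∫_S |Dm_s(x)|²/m_s(x) dx ds < ∞ for every open ball S ⊂ ℝˡ. Suppose that for some L₁ > 0: ∫₀ᵗ sup_{h ∈ C¹₀(ℝˡ)} ∫_{ℝˡ} ( Dh(x)ᵀ( ½ div(c_s(x) m_s(x)) − a_s(x) m_s(x) ) − ½ Dh(x)ᵀ c_s(x) Dh(x) m_s(x) ) dx ds ≤ L₁, where div(c_s m_s) = (div c_s) m_s + c_s Dm_s is the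 weak (rowwise) divergence. Then there exists L₂ > 0, depending only on L₁, t, θ, and the uniform bounds and Lipschitz constants of a, c and the first derivatives of c, such that ∫₀ᵗ ∫_{ℝˡ} |Dm_s(x)|²/m_s(x) dx ds ≤ L₂. -/

import Mathlib

open MeasureTheory Filter Set Topology RealInnerProductSpace

variable {l : ℕ}

/-- `g` is the weak (Sobolev) gradient of `f` on `ℝˡ`; in particular `f ∈ W^{1,1}_loc`. -/
def HasWeakGrad (f : EuclideanSpace ℝ (Fin l) → ℝ)
    (g : EuclideanSpace ℝ (Fin l) → EuclideanSpace ℝ (Fin l)) : Prop :=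
  LocallyIntegrable f volume ∧ LocallyIntegrable g volume ∧
    ∀ p : EuclideanSpace ℝ (Fin l) → ℝ, ContDiff ℝ (⊤ : ℕ∞) p → HasCompactSupport p →
      ∀ v : EuclideanSpace ℝ (Fin l),
        (∫ x, f x * fderiv ℝ p x v) = - ∫ x, ⟪g x, v⟫ * p x

/-- The rowwise divergence `div c` of an operator-valued (matrix-valued) field `c`. -/
noncomputable def matDiv (c : EuclideanSpace ℝ (Fin l) →
      (EuclideanSpace ℝ (Fin l) →L[ℝ] EuclideanSpace ℝ (Fin l)))
    (x : EuclideanSpace ℝ (Fin l)) : EuclideanSpace ℝ (Fin l) :=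
  ∑ j : Fin l, (fderiv ℝ c x (EuclideanSpace.single j (1 : ℝ)))
    (EuclideanSpace.single j (1 : ℝ))

/-!
Write the flux as `½ div(c m) - a m = ½ c Dm + m b`, where `b = ½ div c - a` is Lipschitz. Ignoring
all questions of regularity, test the variational functional at a fixed time with `h = α log m`. The
flux term yields `α θ / 2` times the Fisher information, the quadratic term costs at most
`α² / (2 θ)` times it, and `α = θ² / 4` makes the second a quarter of the first. The drift term
`∫ ⟪Dm, b⟫` is integrated by parts, hence bounded by the Lipschitz constant of `b` times the mass.

To make `h` admissible, `m` is mollified to `u`, `1 / u` is truncated to `g(u)` with integrable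
`g`, and `h` is taken to be the mollification of `α ψ G(u)` with `G` the primitive of `g` and `ψ` a
cutoff. Three errors arise. The cutoff errors contain `∇ψ` against `c` and `b` and are controlled
by the mass, because `(1 + ‖x‖) ‖∇ψ‖` and the Lipschitz constant of `∇ψ` can be made small compared
with the bound on `G`; this is what a logarithmic cutoff achieves. The quadratic term for the
mollified test function is handled by Jensen's inequality. The commutator of mollification with the
flux is of the order of the mollification radius times a local integral of `‖Dm‖² / m`, which is
finite by assumption, so it vanishes in the limit. Removing the mollification, the truncation and
the cutoff by Fatou's lemma gives the bound.
-/

open ContinuousLinearMap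
open scoped Convolution ContDiff NNReal

section Gradient

variable {E : Type*} [NormedAddCommGroup E] [InnerProductSpace ℝ E] [CompleteSpace E]

theorem continuous_gradient_of_contDiff {f : E → ℝ} (hf : ContDiff ℝ 1 f) :
    Continuous (gradient f) :=
  (InnerProductSpace.toDual ℝ E).symm.continuous.comp (hf.continuous_fderiv one_ne_zero)

theorem hasGradientAt_gradient_of_contDiff {f : E → ℝ} (hf : ContDiff ℝ 1 f) (x : E) :
    HasGradientAt f (gradient f x) x :=
  (hf.differentiable one_ne_zero x).hasGradientAt

theorem gradient_eq_zero_of_notMem_tsupport {f : E → ℝ} {x : E} (hx : x ∉ tsupport f) :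
    gradient f x = 0 := by
  rw [gradient, fderiv_of_notMem_tsupport ℝ hx, map_zero]

theorem hasCompactSupport_gradient {f : E → ℝ} (hf : HasCompactSupport f) :
    HasCompactSupport (gradient f) :=
  (hf.fderiv ℝ).comp_left (map_zero _)

theorem hasGradientAt_mul {f g : E → ℝ} {f' g' x : E} (hf : HasGradientAt f f' x)
    (hg : HasGradientAt g g' x) :
    HasGradientAt (fun y ↦ f y * g y) (f x • g' + g x • f') x := by
  rw [hasGradientAt_iff_hasFDerivAt] at *
  exact (hf.fun_mul hg).congr_fderiv (by simp)

theorem hasGradientAt_comp_of_hasDerivAt {Φ : ℝ → ℝ} {Φ' : ℝ} {f : E → ℝ} {f' x : E}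
    (hΦ : HasDerivAt Φ Φ' (f x)) (hf : HasGradientAt f f' x) :
    HasGradientAt (fun y ↦ Φ (f y)) (Φ' • f') x := by
  rw [hasGradientAt_iff_hasFDerivAt] at *
  exact (hΦ.comp_hasFDerivAt x hf).congr_fderiv (by simp)

end Gradient

section LocallyIntegrable

variable {X F G : Type*} [TopologicalSpace X] [MeasurableSpace X] {μ : Measure X}
  [NormedAddCommGroup F] [NormedAddCommGroup G]

theorem locallyIntegrable_norm {f : X → F} (hf : LocallyIntegrable f μ) :
    LocallyIntegrable (fun x ↦ ‖f x‖) μ :=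
  fun x ↦ (hf x).imp fun _ hs ↦ ⟨hs.1, hs.2.norm⟩

theorem locallyIntegrable_clm_comp [NormedSpace ℝ F] [NormedSpace ℝ G] {f : X → F} (T : F →L[ℝ] G)
    (hf : LocallyIntegrable f μ) : LocallyIntegrable (fun x ↦ T (f x)) μ :=
  fun x ↦ (hf x).imp fun _ hs ↦ ⟨hs.1, T.integrable_comp hs.2⟩

end LocallyIntegrable

section Mollification

variable {E : Type*} [NormedAddCommGroup E] [NormedSpace ℝ E] [FiniteDimensional ℝ E]
  [MeasurableSpace E] [BorelSpace E]

/-- The mollification of `f` by the probability density proportional to the bump function `φ`;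
it averages `f` over balls of radius `φ.rOut`. -/
noncomputable def mollify {F : Type*} [NormedAddCommGroup F] [NormedSpace ℝ F]
    (φ : ContDiffBump (0 : E)) (μ : Measure E) (f : E → F) : E → F :=
  φ.normed μ ⋆[lsmul ℝ ℝ, μ] f

variable {φ : ContDiffBump (0 : E)} {μ : Measure E} [μ.IsAddHaarMeasure]

section Vector

variable {F : Type*} [NormedAddCommGroup F] [NormedSpace ℝ F] {f g : E → F}

theorem mollify_apply (f : E → F) (x : E) :
    mollify φ μ f x = ∫ y, φ.normed μ (x - y) • f y ∂μ :=
  convolution_lsmul_swap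

theorem integrable_normed_sub_smul (hf : LocallyIntegrable f μ) (x : E) :
    Integrable (fun y ↦ φ.normed μ (x - y) • f y) μ :=
  hf.integrable_smul_left_of_hasCompactSupport
    (φ.continuous_normed.comp (continuous_const.sub continuous_id))
    (φ.hasCompactSupport_normed.comp_homeomorph (Homeomorph.subLeft x))

theorem contDiff_mollify (hf : LocallyIntegrable f μ) : ContDiff ℝ ∞ (mollify φ μ f) :=
  φ.hasCompactSupport_normed.contDiff_convolution_left _ φ.contDiff_normed hf

theorem continuous_mollify (hf : LocallyIntegrable f μ) : Continuous (mollify φ μ f) :=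
  (contDiff_mollify hf).continuous

theorem hasCompactSupport_mollify (hf : HasCompactSupport f) :
    HasCompactSupport (mollify φ μ f) :=
  φ.hasCompactSupport_normed.convolution _ hf

theorem integrable_mollify (hf : Integrable f μ) : Integrable (mollify φ μ f) μ :=
  φ.integrable_normed.integrable_convolution _ hf

theorem integral_mollify [CompleteSpace F] (hf : Integrable f μ) :
    ∫ x, mollify φ μ f x ∂μ = ∫ x, f x ∂μ := by
  rw [mollify, integral_convolution _ φ.integrable_normed hf, φ.integral_normed, lsmul_apply,
    one_smul]

theorem mollify_add (hf : LocallyIntegrable f μ) (hg : LocallyIntegrable g μ) (x : E) :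
    mollify φ μ (f + g) x = mollify φ μ f x + mollify φ μ g x := by
  simp only [mollify_apply, Pi.add_apply, smul_add]
  exact integral_add (integrable_normed_sub_smul hf x) (integrable_normed_sub_smul hg x)

theorem mollify_const_smul (a : ℝ) (f : E → F) (x : E) :
    mollify φ μ (a • f) x = a • mollify φ μ f x := by
  simp only [mollify_apply, Pi.smul_apply, smul_comm _ a, integral_smul]

theorem mollify_clm_comp {G : Type*} [NormedAddCommGroup G] [NormedSpace ℝ G] [CompleteSpace F]
    [CompleteSpace G] (T : F →L[ℝ] G) (hf : LocallyIntegrable f μ) (x : E) :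
    mollify φ μ (fun y ↦ T (f y)) x = T (mollify φ μ f x) := by
  simp only [mollify_apply, ← T.integral_comp_comm (integrable_normed_sub_smul hf x), map_smul]

theorem norm_mollify_le (x : E) : ‖mollify φ μ f x‖ ≤ mollify φ μ (fun y ↦ ‖f y‖) x := by
  simp only [mollify_apply]
  refine (norm_integral_le_integral_norm _).trans_eq ?_
  simp only [norm_smul, Real.norm_of_nonneg (φ.nonneg_normed _), smul_eq_mul]

theorem mollify_congr_of_dist_lt {x : E} (hfg : ∀ y, dist y x < φ.rOut → f y = g y) :
    mollify φ μ f x = mollify φ μ g x := by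
  simp only [mollify_apply]
  refine integral_congr_ae (Eventually.of_forall fun y ↦ ?_)
  by_cases hy : dist y x < φ.rOut
  · simp only [hfg y hy]
  · have : φ.normed μ (x - y) = 0 := by
      rw [← Function.notMem_support, φ.support_normed_eq, mem_ball_zero_iff, ← dist_eq_norm]
      rwa [dist_comm] at hy
    simp only [this, zero_smul]

theorem mollify_indicator_eq_of_subset {S T : Set E} (hS : Metric.thickening φ.rOut S ⊆ T)
    (f : E → F) : S.EqOn (mollify φ μ (T.indicator f)) (mollify φ μ f) := fun x hx ↦
  mollify_congr_of_dist_lt fun _ hy ↦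
    indicator_of_mem (hS (Metric.mem_thickening_iff.2 ⟨x, hx, hy⟩)) f

theorem ae_tendsto_mollify [CompleteSpace F] {φ : ℕ → ContDiffBump (0 : E)} {K : ℝ}
    (hφ : Tendsto (fun k ↦ (φ k).rOut) atTop (𝓝 0)) (hK : ∀ k, (φ k).rOut ≤ K * (φ k).rIn)
    (hf : LocallyIntegrable f μ) :
    ∀ᵐ x ∂μ, Tendsto (fun k ↦ mollify (φ k) μ f x) atTop (𝓝 (f x)) :=
  ContDiffBump.ae_convolution_tendsto_right_of_locallyIntegrable hφ (Eventually.of_forall hK) hf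

end Vector

section Real

variable {f g : E → ℝ}

theorem mollify_mono (hf : LocallyIntegrable f μ) (hg : LocallyIntegrable g μ)
    (hfg : f ≤ᵐ[μ] g) (x : E) : mollify φ μ f x ≤ mollify φ μ g x := by
  simp only [mollify_apply]
  refine integral_mono_ae (integrable_normed_sub_smul hf x) (integrable_normed_sub_smul hg x) ?_
  filter_upwards [hfg] with y hy using smul_le_smul_of_nonneg_left hy (φ.nonneg_normed _)

theorem mollify_nonneg (hf : ∀ x, 0 ≤ f x) (x : E) : 0 ≤ mollify φ μ f x := by
  rw [mollify_apply]
  exact integral_nonneg fun y ↦ smul_nonneg (φ.nonneg_normed _) (hf y)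

theorem setIntegral_mollify_le (hf0 : ∀ x, 0 ≤ f x) {S T : Set E} (hS : MeasurableSet S)
    (hT : MeasurableSet T) (hST : Metric.thickening φ.rOut S ⊆ T) (hf : IntegrableOn f T μ) :
    ∫ x in S, mollify φ μ f x ∂μ ≤ ∫ x in T, f x ∂μ := by
  have hi : Integrable (T.indicator f) μ := hf.integrable_indicator hT
  calc ∫ x in S, mollify φ μ f x ∂μ
      = ∫ x in S, mollify φ μ (T.indicator f) x ∂μ :=
        setIntegral_congr_fun hS (mollify_indicator_eq_of_subset hST f).symm
    _ ≤ ∫ x, mollify φ μ (T.indicator f) x ∂μ :=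
        setIntegral_le_integral (integrable_mollify hi) <| Eventually.of_forall <|
          mollify_nonneg <| indicator_nonneg fun x _ ↦ hf0 x
    _ = ∫ x in T, f x ∂μ := by rw [integral_mollify hi, integral_indicator hT]

/-- Cauchy–Schwarz for averages, free of division: it bounds `(φ * N)² / (φ * f)` by `φ * J`
when `N² ≤ J f`, with any `γ ≤ 1 / (φ * f)` in place of the reciprocal. -/
theorem mul_sq_mollify_le {N J f : E → ℝ} (hN : LocallyIntegrable N μ)
    (hJ : LocallyIntegrable J μ) (hf : LocallyIntegrable f μ) (hJ0 : ∀ x, 0 ≤ J x)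
    (hf0 : ∀ x, 0 ≤ f x) (hle : ∀ᵐ x ∂μ, N x ^ 2 ≤ J x * f x) {γ : ℝ} (hγ : 0 ≤ γ) {x : E}
    (hγf : γ * mollify φ μ f x ≤ 1) :
    γ * mollify φ μ N x ^ 2 ≤ mollify φ μ J x := by
  set n := mollify φ μ N x
  have hmono : mollify φ μ ((2 * (γ * n)) • N) x ≤ mollify φ μ (J + (γ * n) ^ 2 • f) x := by
    refine mollify_mono (hN.smul _) (hJ.add (hf.smul _)) ?_ x
    filter_upwards [hle] with y hy
    refine le_of_abs_le (abs_le_of_sq_le_sq ?_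
      (add_nonneg (hJ0 y) (mul_nonneg (sq_nonneg _) (hf0 y))))
    simp only [Pi.smul_apply, Pi.add_apply, smul_eq_mul]
    nlinarith [sq_nonneg (J y - (γ * n) ^ 2 * f y), sq_nonneg (γ * n)]
  rw [mollify_add hJ (hf.smul _), mollify_const_smul, mollify_const_smul] at hmono
  simp only [smul_eq_mul] at hmono
  have hle' : γ * n ^ 2 * (γ * mollify φ μ f x) ≤ γ * n ^ 2 :=
    mul_le_of_le_one_right (by positivity) hγf
  linear_combination hmono + hle'

theorem sq_norm_mollify_le {F : Type*} [NormedAddCommGroup F] [NormedSpace ℝ F] {u : E → F}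
    (hu : LocallyIntegrable u μ) (hu2 : LocallyIntegrable (fun x ↦ ‖u x‖ ^ 2) μ) (x : E) :
    ‖mollify φ μ u x‖ ^ 2 ≤ mollify φ μ (fun y ↦ ‖u y‖ ^ 2) x := by
  have hone : mollify φ μ (fun _ : E ↦ (1 : ℝ)) x = 1 :=
    ContDiffBump.normed_convolution_eq_right fun _ _ ↦ rfl
  have key := mul_sq_mollify_le (φ := φ) (f := fun _ ↦ 1) (γ := 1) (x := x)
    (locallyIntegrable_norm hu) hu2 (locallyIntegrable_const 1) (fun _ ↦ sq_nonneg _)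
    (fun _ ↦ zero_le_one) (Eventually.of_forall fun _ ↦ (mul_one _).ge) zero_le_one
    (by rw [hone, mul_one])
  rw [one_mul] at key
  exact (pow_le_pow_left₀ (norm_nonneg _) (norm_mollify_le x) 2).trans key

end Real

section Duality

variable {F : Type*} [NormedAddCommGroup F] [InnerProductSpace ℝ F] {u V : E → F}

theorem integrable_prod_normed_sub_mul_inner (hu : Integrable u μ) (hu' : HasCompactSupport u)
    (hV : LocallyIntegrable V μ) :
    Integrable (fun p : E × E ↦ φ.normed μ (p.1 - p.2) * ⟪u p.2, V p.1⟫) (μ.prod μ) := by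
  obtain ⟨C, hC⟩ := φ.continuous_normed.bounded_above_of_compact_support
    (φ.hasCompactSupport_normed (μ := μ))
  set S := Metric.cthickening φ.rOut (tsupport u)
  have hVS : Integrable (S.indicator V) μ :=
    (hV.integrableOn_isCompact hu'.isCompact.cthickening).integrable_indicator
      Metric.isClosed_cthickening.measurableSet
  refine ((hVS.norm.mul_prod hu.norm).const_mul C).mono' ?_ (Eventually.of_forall fun p ↦ ?_)
  · exact (φ.continuous_normed.comp (continuous_fst.sub continuous_snd)).aestronglyMeasurable.mul
      (hu.aestronglyMeasurable.comp_snd.inner hV.aestronglyMeasurable.comp_fst)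
  have hC0 : 0 ≤ C := (norm_nonneg _).trans (hC 0)
  by_cases hp : φ.normed μ (p.1 - p.2) * ⟪u p.2, V p.1⟫ = 0
  · rw [hp, norm_zero]
    positivity
  have hsub : p.1 - p.2 ∈ Metric.ball 0 φ.rOut := by
    rw [← φ.support_normed_eq (μ := μ)]
    exact left_ne_zero_of_mul hp
  have hup : p.2 ∈ tsupport u := subset_tsupport _ fun h ↦ hp (by rw [h, inner_zero_left, mul_zero])
  have hpS : p.1 ∈ S := Metric.thickening_subset_cthickening _ _ <| Metric.mem_thickening_iff.2
    ⟨p.2, hup, by simpa [dist_eq_norm] using hsub⟩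
  rw [indicator_of_mem hpS, norm_mul, mul_comm ‖V p.1‖]
  gcongr
  exacts [hC _, norm_inner_le_norm _ _]

theorem integral_inner_mollify [CompleteSpace F] (hu : Integrable u μ) (hu' : HasCompactSupport u)
    (hV : LocallyIntegrable V μ) :
    ∫ x, ⟪mollify φ μ u x, V x⟫ ∂μ = ∫ x, ⟪u x, mollify φ μ V x⟫ ∂μ := by
  have hleft : ∀ x, ⟪mollify φ μ u x, V x⟫ = ∫ y, φ.normed μ (x - y) * ⟪u y, V x⟫ ∂μ := fun x ↦ by
    rw [real_inner_comm, mollify_apply,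
      ← integral_inner (integrable_normed_sub_smul hu.locallyIntegrable x)]
    simp only [inner_smul_right, real_inner_comm]
  have hright : ∀ y, ⟪u y, mollify φ μ V y⟫ = ∫ x, φ.normed μ (x - y) * ⟪u y, V x⟫ ∂μ := fun y ↦ by
    rw [mollify_apply, ← integral_inner (integrable_normed_sub_smul hV y)]
    simp only [inner_smul_right, ← neg_sub y, φ.normed_neg]
  simp only [hleft, hright]
  exact integral_integral_swap (integrable_prod_normed_sub_mul_inner hu hu' hV)

theorem integral_mollify_mul {u V : E → ℝ} (hu : Integrable u μ) (hu' : HasCompactSupport u)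
    (hV : LocallyIntegrable V μ) :
    ∫ x, mollify φ μ u x * V x ∂μ = ∫ x, u x * mollify φ μ V x ∂μ := by
  simpa only [RCLike.inner_apply, conj_trivial, mul_comm] using integral_inner_mollify hu hu' hV

end Duality

end Mollification

section ShrinkingBump

variable (E : Type*) [NormedAddCommGroup E]

/-- A sequence of bump functions concentrating at the origin. -/
noncomputable def shrinkingBump (k : ℕ) : ContDiffBump (0 : E) where
  rIn := 1 / (2 * (k + 1))
  rOut := 1 / (k + 1)
  rIn_pos := by positivity
  rIn_lt_rOut := one_div_lt_one_div_of_lt (by positivity) (by linarith [k.cast_nonneg (α := ℝ)])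

theorem shrinkingBump_rOut_le_one (k : ℕ) : (shrinkingBump E k).rOut ≤ 1 :=
  (div_le_one (by positivity)).2 (by simp)

theorem tendsto_shrinkingBump_rOut : Tendsto (fun k ↦ (shrinkingBump E k).rOut) atTop (𝓝 0) :=
  tendsto_one_div_add_atTop_nhds_zero_nat

variable {E} [NormedSpace ℝ E] [FiniteDimensional ℝ E] [MeasurableSpace E] [BorelSpace E]
  {μ : Measure E} [μ.IsAddHaarMeasure] {F : Type*} [NormedAddCommGroup F] [NormedSpace ℝ F]
  [CompleteSpace F]

theorem ae_tendsto_mollify_shrinkingBump {f : E → F} (hf : LocallyIntegrable f μ) :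
    ∀ᵐ x ∂μ, Tendsto (fun k ↦ mollify (shrinkingBump E k) μ f x) atTop (𝓝 (f x)) :=
  ae_tendsto_mollify (K := 2) (tendsto_shrinkingBump_rOut E)
    (fun k ↦ by simp only [shrinkingBump]; field_simp; rfl) hf

end ShrinkingBump

section VaryingDomination

variable {α V : Type*} [MeasurableSpace α] {μ : Measure α} [NormedAddCommGroup V] [NormedSpace ℝ V]

theorem tendsto_integral_abs_sub_of_tendsto_integral {G : ℕ → α → ℝ} {g : α → ℝ}
    (hG : ∀ n, Integrable (G n) μ) (hg : Integrable g μ) (hG0 : ∀ n, ∀ᵐ x ∂μ, 0 ≤ G n x)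
    (hGg : ∀ᵐ x ∂μ, Tendsto (G · x) atTop (𝓝 (g x)))
    (hint : Tendsto (fun n ↦ ∫ x, G n x ∂μ) atTop (𝓝 (∫ x, g x ∂μ))) :
    Tendsto (fun n ↦ ∫ x, |G n x - g x| ∂μ) atTop (𝓝 0) := by
  have hsub : ∀ n, Integrable (fun x ↦ G n x - g x) μ := fun n ↦ (hG n).sub hg
  have hpart : ∀ n, Integrable (fun x ↦ max (g x - G n x) 0) μ := fun n ↦
    (hg.sub (hG n)).pos_part
  have hpos : Tendsto (fun n ↦ ∫ x, max (g x - G n x) 0 ∂μ) atTop (𝓝 0) := by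
    suffices Tendsto (fun n ↦ ∫ x, max (g x - G n x) 0 ∂μ) atTop (𝓝 (∫ _, 0 ∂μ)) by
      rwa [integral_zero] at this
    refine tendsto_integral_of_dominated_convergence (fun x ↦ |g x|)
      (fun n ↦ (hpart n).aestronglyMeasurable) hg.abs (fun n ↦ ?_) ?_
    · filter_upwards [hG0 n] with x hx
      rw [Real.norm_of_nonneg (le_max_right _ _)]
      exact max_le (by linarith [le_abs_self (g x)]) (abs_nonneg _)
    · filter_upwards [hGg] with x hx
      have := (hx.const_sub (g x)).max (tendsto_const_nhds (x := (0 : ℝ)))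
      rwa [sub_self, max_self] at this
  have habs : ∀ n, ∫ x, |G n x - g x| ∂μ =
      (∫ x, G n x ∂μ - ∫ x, g x ∂μ) + 2 * ∫ x, max (g x - G n x) 0 ∂μ := fun n ↦ by
    rw [← integral_sub (hG n) hg, ← integral_const_mul,
      ← integral_add (hsub n) ((hpart n).const_mul 2)]
    refine integral_congr_ae (Eventually.of_forall fun x ↦ ?_)
    rcases le_total (g x) (G n x) with h | h
    · simp only [abs_of_nonneg (sub_nonneg.2 h), max_eq_right (sub_nonpos.2 h)]
      ring
    · simp only [abs_of_nonpos (sub_nonpos.2 h), max_eq_left (sub_nonneg.2 h)]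
      ring
  simp only [habs]
  simpa using (hint.sub_const (∫ x, g x ∂μ)).add (hpos.const_mul 2)

theorem tendsto_integral_of_tendsto_integral_dominating {F : ℕ → α → V} {f : α → V}
    {G : ℕ → α → ℝ} {g : α → ℝ} (hF : ∀ n, AEStronglyMeasurable (F n) μ)
    (hG : ∀ n, Integrable (G n) μ) (hg : Integrable g μ) (hFG : ∀ n, ∀ᵐ x ∂μ, ‖F n x‖ ≤ G n x)
    (hFf : ∀ᵐ x ∂μ, Tendsto (F · x) atTop (𝓝 (f x)))
    (hGg : ∀ᵐ x ∂μ, Tendsto (G · x) atTop (𝓝 (g x)))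
    (hint : Tendsto (fun n ↦ ∫ x, G n x ∂μ) atTop (𝓝 (∫ x, g x ∂μ))) :
    Tendsto (fun n ↦ ∫ x, F n x ∂μ) atTop (𝓝 (∫ x, f x ∂μ)) := by
  have hfm : AEStronglyMeasurable f μ := aestronglyMeasurable_of_tendsto_ae atTop hF hFf
  have hfg : ∀ᵐ x ∂μ, ‖f x‖ ≤ g x := by
    filter_upwards [ae_all_iff.2 hFG, hFf, hGg] with x h hf hg
      using le_of_tendsto_of_tendsto' hf.norm hg h
  have hfi : Integrable f μ := hg.mono' hfm hfg
  have hFi : ∀ n, Integrable (F n) μ := fun n ↦ (hG n).mono' (hF n) (hFG n)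
  have hmin : ∀ n, Integrable (fun x ↦ min ‖F n x - f x‖ (2 * g x)) μ := fun n ↦
    ((hFi n).sub hfi).norm.inf (hg.const_mul 2)
  have hGg' := tendsto_integral_abs_sub_of_tendsto_integral hG hg
    (fun n ↦ (hFG n).mono fun _ h ↦ (norm_nonneg _).trans h) hGg hint
  have hmin' : Tendsto (fun n ↦ ∫ x, min ‖F n x - f x‖ (2 * g x) ∂μ) atTop (𝓝 0) := by
    rw [← integral_zero α ℝ]
    refine tendsto_integral_of_dominated_convergence (fun x ↦ 2 * g x)
      (fun n ↦ (hmin n).aestronglyMeasurable) (hg.const_mul 2) (fun n ↦ ?_) ?_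
    · filter_upwards [hfg] with x hx
      rw [Real.norm_of_nonneg (le_min (norm_nonneg _) (by linarith [norm_nonneg (f x)]))]
      exact min_le_right _ _
    · filter_upwards [hFf, hfg] with x hf hx
      have := (tendsto_iff_norm_sub_tendsto_zero.1 hf).min (tendsto_const_nhds (x := 2 * g x))
      rwa [min_eq_left (by linarith [norm_nonneg (f x)])] at this
  rw [tendsto_iff_norm_sub_tendsto_zero]
  refine squeeze_zero (fun _ ↦ norm_nonneg _) (fun n ↦ ?_) (by simpa using hmin'.add hGg')
  have hGi : Integrable (fun x ↦ |G n x - g x|) μ := ((hG n).sub hg).abs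
  rw [← integral_sub (hFi n) hfi, ← integral_add (hmin n) hGi]
  refine norm_integral_le_of_norm_le ((hmin n).add hGi) ?_
  filter_upwards [hfg, hFG n] with x hfx hFx
  rw [← min_add_add_right]
  exact le_min (le_add_of_nonneg_right (abs_nonneg _))
    (by linarith [norm_sub_le (F n x) (f x), le_abs_self (G n x - g x)])

end VaryingDomination

section MollifiedDomination

variable {E : Type*} [NormedAddCommGroup E] [NormedSpace ℝ E] [FiniteDimensional ℝ E]
  [MeasurableSpace E] [BorelSpace E] {μ : Measure E} [μ.IsAddHaarMeasure]

theorem tendsto_integral_of_norm_le_mollify {V : Type*} [NormedAddCommGroup V] [NormedSpace ℝ V]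
    {h : E → ℝ} (hh : LocallyIntegrable h μ) (h0 : ∀ x, 0 ≤ h x) {K : Set E} (hK : IsCompact K)
    {F : ℕ → E → V} {f : E → V} (hF : ∀ k, AEStronglyMeasurable (F k) μ)
    (hFK : ∀ k, Function.support (F k) ⊆ K)
    (hFh : ∀ k x, ‖F k x‖ ≤ mollify (shrinkingBump E k) μ h x)
    (hFf : ∀ᵐ x ∂μ, Tendsto (F · x) atTop (𝓝 (f x))) :
    Tendsto (fun k ↦ ∫ x, F k x ∂μ) atTop (𝓝 (∫ x, f x ∂μ)) := by
  set S := Metric.cthickening 1 K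
  have hi : Integrable (S.indicator h) μ :=
    (hh.integrableOn_isCompact hK.cthickening).integrable_indicator
      Metric.isClosed_cthickening.measurableSet
  have hS : ∀ k, Metric.thickening (shrinkingBump E k).rOut K ⊆ S := fun k ↦
    (Metric.thickening_mono (shrinkingBump_rOut_le_one E k) K).trans
      (Metric.thickening_subset_cthickening 1 K)
  refine tendsto_integral_of_tendsto_integral_dominating hF (fun k ↦ integrable_mollify hi) hi
    (fun k ↦ Eventually.of_forall fun x ↦ ?_) hFf
    (ae_tendsto_mollify_shrinkingBump hi.locallyIntegrable)
    (by simpa only [integral_mollify hi] using tendsto_const_nhds)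
  by_cases hx : x ∈ K
  · rw [mollify_indicator_eq_of_subset (hS k) h hx]
    exact hFh k x
  · rw [Function.notMem_support.1 fun hx' ↦ hx (hFK k hx'), norm_zero]
    exact mollify_nonneg (indicator_nonneg fun x _ ↦ h0 x) x

end MollifiedDomination

section WeakGradient

variable {f : EuclideanSpace ℝ (Fin l) → ℝ}
  {g : EuclideanSpace ℝ (Fin l) → EuclideanSpace ℝ (Fin l)}

theorem hasWeakGrad_gradient_of_contDiff (hf : ContDiff ℝ 1 f) : HasWeakGrad f (gradient f) := by
  refine ⟨hf.continuous.locallyIntegrable,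
    (continuous_gradient_of_contDiff hf).locallyIntegrable, fun p hp hp' v ↦ ?_⟩
  have hp1 : ContDiff ℝ 1 p := hp.of_le (by exact_mod_cast le_top)
  simp only [inner_gradient_left]
  refine integral_mul_fderiv_eq_neg_fderiv_mul_of_integrable ?_ ?_ ?_
    (fun x _ ↦ hf.differentiable one_ne_zero x) (fun x _ ↦ hp1.differentiable one_ne_zero x)
  · exact (((hf.continuous_fderiv one_ne_zero).clm_apply continuous_const).mul
      hp.continuous).integrable_of_hasCompactSupport hp'.mul_left
  · exact (hf.continuous.mul ((hp1.continuous_fderiv one_ne_zero).clm_apply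
      continuous_const)).integrable_of_hasCompactSupport (hp'.fderiv_apply (𝕜 := ℝ) v).mul_left
  · exact (hf.continuous.mul hp.continuous).integrable_of_hasCompactSupport hp'.mul_left

theorem fderiv_comp_sub_left_apply {E : Type*} [NormedAddCommGroup E] [NormedSpace ℝ E]
    {p : E → ℝ} (hp : Differentiable ℝ p) (x y v : E) :
    fderiv ℝ (fun z ↦ p (x - z)) y v = -fderiv ℝ p (x - y) v := by
  have h := (hp (x - y)).hasFDerivAt.comp y ((hasFDerivAt_id y).const_sub x)
  simpa [Function.comp_def] using congrArg (· v) h.fderiv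

theorem HasWeakGrad.hasGradientAt_mollify (h : HasWeakGrad f g)
    (φ : ContDiffBump (0 : EuclideanSpace ℝ (Fin l))) (x : EuclideanSpace ℝ (Fin l)) :
    HasGradientAt (mollify φ volume f) (mollify φ volume g x) x := by
  set σ := φ.normed (volume : Measure (EuclideanSpace ℝ (Fin l)))
  have hσ : ContDiff ℝ 1 σ := φ.contDiff_normed
  have hσ' : HasCompactSupport σ := φ.hasCompactSupport_normed
  rw [hasGradientAt_iff_hasFDerivAt]
  refine (hσ'.hasFDerivAt_convolution_left (lsmul ℝ ℝ) hσ h.1 x).congr_fderiv ?_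
  ext v
  have hi := ((hσ'.fderiv ℝ).convolutionExists_left
    ((lsmul ℝ ℝ : ℝ →L[ℝ] ℝ →L[ℝ] ℝ).precompL (EuclideanSpace ℝ (Fin l)))
    (hσ.continuous_fderiv one_ne_zero) h.1 x).integrable_swap
  have hweak := h.2.2 (fun y ↦ σ (x - y)) (φ.contDiff_normed.comp (contDiff_const.sub contDiff_id))
    (hσ'.comp_homeomorph (Homeomorph.subLeft x)) v
  simp only [fderiv_comp_sub_left_apply (hσ.differentiable one_ne_zero), mul_neg, integral_neg,
    neg_inj] at hweak
  rw [convolution_eq_swap, ContinuousLinearMap.integral_apply hi,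
    InnerProductSpace.toDual_apply_apply, mollify_apply, real_inner_comm,
    ← integral_inner (integrable_normed_sub_smul h.2.1 x)]
  simp only [precompL_apply, lsmul_apply, smul_eq_mul, inner_smul_right]
  simpa only [mul_comm, real_inner_comm] using hweak

theorem HasWeakGrad.gradient_mollify (h : HasWeakGrad f g)
    (φ : ContDiffBump (0 : EuclideanSpace ℝ (Fin l))) :
    gradient (mollify φ volume f) = mollify φ volume g :=
  gradient_eq (h.hasGradientAt_mollify φ)

theorem HasWeakGrad.ae_eq_zero (h : HasWeakGrad (fun _ ↦ 0) g) : g =ᵐ[volume] 0 := by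
  refine ae_eq_zero_of_integral_contDiff_smul_eq_zero h.2.1 fun p hp hp' ↦ ?_
  refine ext_inner_right ℝ fun v ↦ ?_
  have hi : Integrable fun x ↦ p x • g x :=
    h.2.1.integrable_smul_left_of_hasCompactSupport hp.continuous hp'
  have := h.2.2 p hp hp' v
  simp only [zero_mul, integral_zero, zero_eq_neg] at this
  rw [real_inner_comm, ← integral_inner hi, inner_zero_left, ← this]
  exact integral_congr_ae (Eventually.of_forall fun x ↦ by
    simp only [inner_smul_right, real_inner_comm, mul_comm])

end WeakGradient

section ChainRule

variable {f : EuclideanSpace ℝ (Fin l) → ℝ}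
  {g : EuclideanSpace ℝ (Fin l) → EuclideanSpace ℝ (Fin l)} {Φ : ℝ → ℝ} {C : ℝ}

theorem abs_le_of_abs_deriv_le (hΦ : ContDiff ℝ 1 Φ) (hC : ∀ s, |deriv Φ s| ≤ C) (s : ℝ) :
    |Φ s| ≤ |Φ 0| + C * |s| := by
  have h := Convex.norm_image_sub_le_of_norm_deriv_le (f := Φ) (x := 0) (y := s)
    (fun x _ ↦ hΦ.differentiable one_ne_zero x) (fun x _ ↦ hC x) convex_univ trivial trivial
  rw [sub_zero, Real.norm_eq_abs, Real.norm_eq_abs] at h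
  linarith [abs_sub_abs_le_abs_sub (Φ s) (Φ 0)]

theorem locallyIntegrable_comp_of_abs_deriv_le (hf : LocallyIntegrable f) (hΦ : ContDiff ℝ 1 Φ)
    (hC : ∀ s, |deriv Φ s| ≤ C) : LocallyIntegrable fun x ↦ Φ (f x) := by
  refine ((locallyIntegrable_const |Φ 0|).add ((locallyIntegrable_norm hf).smul C)).mono
    (hΦ.continuous.comp_aestronglyMeasurable hf.aestronglyMeasurable) (Eventually.of_forall ?_)
  exact fun x ↦ (abs_le_of_abs_deriv_le hΦ hC (f x)).trans (le_abs_self _)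

theorem locallyIntegrable_deriv_comp_smul (hf : LocallyIntegrable f) (hg : LocallyIntegrable g)
    (hΦ : ContDiff ℝ 1 Φ) (hC : ∀ s, |deriv Φ s| ≤ C) :
    LocallyIntegrable fun x ↦ deriv Φ (f x) • g x := by
  refine (hg.smul C).mono (((hΦ.continuous_deriv_one).comp_aestronglyMeasurable
    hf.aestronglyMeasurable).smul hg.aestronglyMeasurable) (Eventually.of_forall fun x ↦ ?_)
  simp only [Pi.smul_apply, norm_smul]
  exact mul_le_mul_of_nonneg_right ((hC _).trans (le_abs_self C)) (norm_nonneg _)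

theorem HasWeakGrad.tendsto_integral_comp_mollify_mul (h : HasWeakGrad f g)
    (hΦ : ContDiff ℝ 1 Φ) (hC : ∀ s, |deriv Φ s| ≤ C) {w : EuclideanSpace ℝ (Fin l) → ℝ}
    (hw : Continuous w) (hw' : HasCompactSupport w) :
    Tendsto (fun k ↦ ∫ x, Φ (mollify (shrinkingBump _ k) volume f x) * w x) atTop
      (𝓝 (∫ x, Φ (f x) * w x)) := by
  obtain ⟨W, hW⟩ := hw.bounded_above_of_compact_support hw'
  have hC0 : 0 ≤ C := (abs_nonneg _).trans (hC 0)
  have hW0 : 0 ≤ W := (norm_nonneg _).trans (hW 0)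
  have hn : LocallyIntegrable fun x ↦ ‖f x‖ := locallyIntegrable_norm h.1
  have hc : LocallyIntegrable fun _ : EuclideanSpace ℝ (Fin l) ↦ |Φ 0| := locallyIntegrable_const _
  have hfk : ∀ k, Continuous (mollify (shrinkingBump _ k) volume f) := fun k ↦
    continuous_mollify h.1
  refine tendsto_integral_of_norm_le_mollify (h := W • ((fun _ ↦ |Φ 0|) + C • fun x ↦ ‖f x‖))
    ((hc.add (hn.smul C)).smul W)
    (fun x ↦ mul_nonneg hW0 (add_nonneg (abs_nonneg _) (mul_nonneg hC0 (norm_nonneg _))))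
    hw' (fun k ↦ ((hΦ.continuous.comp (hfk k)).mul hw).aestronglyMeasurable)
    (fun k ↦ (Function.support_mul_subset_right _ _).trans (subset_tsupport w))
    (fun k x ↦ ?_) ?_
  · have hconst : mollify (shrinkingBump _ k) volume (fun _ ↦ |Φ 0|) x = |Φ 0| :=
      ContDiffBump.normed_convolution_eq_right fun _ _ ↦ rfl
    rw [mollify_const_smul, mollify_add hc (hn.smul C), mollify_const_smul, hconst, norm_mul,
      smul_eq_mul, mul_comm W]
    refine mul_le_mul ((abs_le_of_abs_deriv_le hΦ hC _).trans ?_) (hW x) (norm_nonneg _) ?_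
    · exact add_le_add_right (mul_le_mul_of_nonneg_left (norm_mollify_le (f := f) x) hC0) _
    · exact add_nonneg (abs_nonneg _)
        (mul_nonneg hC0 (mollify_nonneg (f := fun x ↦ ‖f x‖) (fun x ↦ norm_nonneg (f x)) x))
  · filter_upwards [ae_tendsto_mollify_shrinkingBump h.1] with x hx
      using ((hΦ.continuous.tendsto _).comp hx).mul_const _

theorem HasWeakGrad.tendsto_integral_deriv_comp_mollify_mul (h : HasWeakGrad f g)
    (hΦ : ContDiff ℝ 1 Φ) (hC : ∀ s, |deriv Φ s| ≤ C) {w : EuclideanSpace ℝ (Fin l) → ℝ}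
    (hw : Continuous w) (hw' : HasCompactSupport w) (v : EuclideanSpace ℝ (Fin l)) :
    Tendsto (fun k ↦ ∫ x, ⟪deriv Φ (mollify (shrinkingBump _ k) volume f x) •
        mollify (shrinkingBump _ k) volume g x, v⟫ * w x) atTop
      (𝓝 (∫ x, ⟪deriv Φ (f x) • g x, v⟫ * w x)) := by
  obtain ⟨W, hW⟩ := hw.bounded_above_of_compact_support hw'
  have hC0 : 0 ≤ C := (abs_nonneg _).trans (hC 0)
  have hW0 : 0 ≤ W := (norm_nonneg _).trans (hW 0)
  refine tendsto_integral_of_norm_le_mollify (h := (C * ‖v‖ * W) • fun x ↦ ‖g x‖)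
    ((locallyIntegrable_norm h.2.1).smul _)
    (fun x ↦ mul_nonneg (by positivity) (norm_nonneg _)) hw' (fun k ↦ ?_)
    (fun k ↦ (Function.support_mul_subset_right _ _).trans (subset_tsupport w))
    (fun k x ↦ ?_) ?_
  · exact ((((hΦ.continuous_deriv_one.comp (continuous_mollify h.1)).smul
      (continuous_mollify h.2.1)).inner continuous_const).mul hw).aestronglyMeasurable
  · rw [mollify_const_smul, norm_mul]
    calc _ ≤ C * mollify (shrinkingBump _ k) volume (fun x ↦ ‖g x‖) x * ‖v‖ * W := by
          refine mul_le_mul ((norm_inner_le_norm _ _).trans ?_) (hW x) (norm_nonneg _) ?_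
          · rw [norm_smul]
            gcongr
            exacts [hC _, norm_mollify_le x]
          · have := mollify_nonneg (φ := shrinkingBump _ k) (μ := volume)
              (fun x ↦ norm_nonneg (g x)) x
            positivity
      _ = _ := by rw [smul_eq_mul]; ring
  · filter_upwards [ae_tendsto_mollify_shrinkingBump h.1,
      ae_tendsto_mollify_shrinkingBump h.2.1] with x hf hg
      using ((((hΦ.continuous_deriv_one.tendsto _).comp hf).smul hg).inner
        tendsto_const_nhds).mul_const _

theorem HasWeakGrad.comp (h : HasWeakGrad f g) (hΦ : ContDiff ℝ 1 Φ)
    (hC : ∀ s, |deriv Φ s| ≤ C) :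
    HasWeakGrad (fun x ↦ Φ (f x)) fun x ↦ deriv Φ (f x) • g x := by
  refine ⟨locallyIntegrable_comp_of_abs_deriv_le h.1 hΦ hC,
    locallyIntegrable_deriv_comp_smul h.1 h.2.1 hΦ hC, fun p hp hp' v ↦ ?_⟩
  have hpv : Continuous fun x ↦ fderiv ℝ p x v :=
    (hp.continuous_fderiv (by simp)).clm_apply continuous_const
  refine tendsto_nhds_unique
    (h.tendsto_integral_comp_mollify_mul hΦ hC hpv (hp'.fderiv_apply (𝕜 := ℝ) v))
    ((h.tendsto_integral_deriv_comp_mollify_mul hΦ hC hp.continuous hp' v).neg.congr fun k ↦ ?_)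
  have hfk : ContDiff ℝ 1 (mollify (shrinkingBump _ k) volume f) :=
    (contDiff_mollify h.1).of_le (by exact_mod_cast le_top)
  have hweak := (hasWeakGrad_gradient_of_contDiff (hΦ.comp hfk)).2.2 p hp hp' v
  have hgrad : ∀ x, gradient (Φ ∘ mollify (shrinkingBump _ k) volume f) x =
      deriv Φ (mollify (shrinkingBump _ k) volume f x) • mollify (shrinkingBump _ k) volume g x :=
    fun x ↦ (hasGradientAt_comp_of_hasDerivAt (hΦ.differentiable one_ne_zero _).hasDerivAt
      (h.hasGradientAt_mollify _ x)).gradient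
  simp only [hgrad] at hweak
  exact hweak.symm

end ChainRule

section ZeroSet

variable {f : EuclideanSpace ℝ (Fin l) → ℝ}
  {g : EuclideanSpace ℝ (Fin l) → EuclideanSpace ℝ (Fin l)}

theorem hasDerivAt_mul_arctan_div {δ : ℝ} (hδ : δ ≠ 0) (s : ℝ) :
    HasDerivAt (fun r ↦ δ * Real.arctan (r / δ)) (1 + (s / δ) ^ 2)⁻¹ s := by
  refine ((((hasDerivAt_id s).div_const δ).arctan).const_mul δ).congr_deriv ?_
  simp only [id]
  field_simp

theorem tendsto_inv_one_add_div_sq (s : ℝ) :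
    Tendsto (fun δ : ℝ ↦ (1 + (s / δ) ^ 2)⁻¹) (𝓝[>] 0) (𝓝 (if s = 0 then 1 else 0)) := by
  split_ifs with hs
  · simp [hs]
  · refine tendsto_inv_atTop_zero.comp (tendsto_atTop_add_const_left _ 1 ?_)
    simpa only [div_eq_mul_inv, mul_pow, Function.comp_def] using
      ((tendsto_pow_atTop two_ne_zero).comp tendsto_inv_nhdsGT_zero).const_mul_atTop
        (sq_pos_of_ne_zero hs)

theorem abs_inv_one_add_sq_le_one (s : ℝ) : |(1 + s ^ 2)⁻¹| ≤ 1 := by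
  rw [abs_of_nonneg (by positivity)]
  exact inv_le_one_of_one_le₀ (by linarith [sq_nonneg s])

theorem HasWeakGrad.mul_arctan_div (h : HasWeakGrad f g) {δ : ℝ} (hδ : δ ≠ 0) :
    HasWeakGrad (fun x ↦ δ * Real.arctan (f x / δ)) fun x ↦ (1 + (f x / δ) ^ 2)⁻¹ • g x := by
  have hderiv : deriv (fun r ↦ δ * Real.arctan (r / δ)) = fun s ↦ (1 + (s / δ) ^ 2)⁻¹ :=
    deriv_eq (hasDerivAt_mul_arctan_div hδ)
  have hΦ : ContDiff ℝ 1 fun r ↦ δ * Real.arctan (r / δ) :=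
    contDiff_const.mul (Real.contDiff_arctan.comp (contDiff_id.div_const δ))
  simpa only [hderiv] using
    h.comp hΦ (fun s ↦ by rw [hderiv]; exact abs_inv_one_add_sq_le_one (s / δ))

theorem tendsto_integral_mul_arctan_div_mul {w : EuclideanSpace ℝ (Fin l) → ℝ}
    (hw : Integrable w) :
    Tendsto (fun δ : ℝ ↦ ∫ x, δ * Real.arctan (f x / δ) * w x) (𝓝[>] 0) (𝓝 0) := by
  have hlim : Tendsto (fun δ : ℝ ↦ |δ| * ∫ x, Real.pi / 2 * |w x|) (𝓝[>] 0) (𝓝 0) := by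
    refine Tendsto.mono_left ?_ inf_le_left
    exact Continuous.tendsto' (by fun_prop) 0 0 (by simp)
  refine squeeze_zero_norm (fun δ ↦ ?_) hlim
  rw [← integral_const_mul]
  refine norm_integral_le_of_norm_le ((hw.abs.const_mul _).const_mul _)
    (Eventually.of_forall fun x ↦ ?_)
  rw [norm_mul, norm_mul, mul_assoc]
  gcongr
  exacts [le_rfl, abs_le.2 ⟨(Real.neg_pi_div_two_lt_arctan _).le, (Real.arctan_lt_pi_div_two _).le⟩,
    le_rfl]

theorem HasWeakGrad.tendsto_integral_inv_one_add_sq_smul (h : HasWeakGrad f g)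
    {w : EuclideanSpace ℝ (Fin l) → ℝ} (hw : Continuous w) (hw' : HasCompactSupport w)
    (v : EuclideanSpace ℝ (Fin l)) :
    Tendsto (fun δ : ℝ ↦ ∫ x, ⟪(1 + (f x / δ) ^ 2)⁻¹ • g x, v⟫ * w x) (𝓝[>] 0)
      (𝓝 (∫ x, ⟪(if f x = 0 then (1 : ℝ) else 0) • g x, v⟫ * w x)) := by
  have hi : Integrable fun x ↦ w x • g x :=
    h.2.1.integrable_smul_left_of_hasCompactSupport hw hw'
  refine tendsto_integral_filter_of_dominated_convergence (fun x ↦ ‖w x • g x‖ * ‖v‖)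
    (Eventually.of_forall fun δ ↦ ?_) (Eventually.of_forall fun δ ↦ Eventually.of_forall fun x ↦ ?_)
    (hi.norm.mul_const _) (Eventually.of_forall fun x ↦ ?_)
  · have hf : AEMeasurable f := h.1.aestronglyMeasurable.aemeasurable
    have : AEMeasurable fun x ↦ (1 + (f x / δ) ^ 2)⁻¹ := by fun_prop
    exact ((this.aestronglyMeasurable.smul h.2.1.aestronglyMeasurable).inner
      aestronglyMeasurable_const).mul hw.aestronglyMeasurable
  · rw [real_inner_smul_left, norm_mul, norm_mul, norm_smul]
    calc _ ≤ 1 * (‖g x‖ * ‖v‖) * ‖w x‖ := by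
          gcongr
          exacts [abs_inv_one_add_sq_le_one _, norm_inner_le_norm _ _]
      _ = _ := by ring
  · exact (((tendsto_inv_one_add_div_sq (f x)).smul_const (g x)).inner
      tendsto_const_nhds).mul_const _

/-- The weak gradient of `δ arctan (f / δ)` tends to that of `f` on `{f = 0}` and to `0` elsewhere,
while `δ arctan (f / δ)` itself tends to `0`. -/
theorem HasWeakGrad.ae_eq_zero_of_eq_zero (h : HasWeakGrad f g) :
    ∀ᵐ x, f x = 0 → g x = 0 := by
  have hzero : HasWeakGrad (fun _ ↦ 0) fun x ↦ (if f x = 0 then (1 : ℝ) else 0) • g x := by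
    refine ⟨locallyIntegrable_const 0, h.2.1.mono ?_ (Eventually.of_forall fun x ↦ ?_),
      fun p hp hp' v ↦ ?_⟩
    · have hs : Measurable fun s : ℝ ↦ if s = 0 then (1 : ℝ) else 0 :=
        Measurable.ite (measurableSet_singleton 0) measurable_const measurable_const
      exact (hs.comp_aemeasurable h.1.aestronglyMeasurable.aemeasurable).aestronglyMeasurable.smul
        h.2.1.aestronglyMeasurable
    · split_ifs <;> simp
    · have hpv : Integrable fun x ↦ fderiv ℝ p x v :=
        ((hp.continuous_fderiv (by simp)).clm_apply
          continuous_const).integrable_of_hasCompactSupport (hp'.fderiv_apply (𝕜 := ℝ) v)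
      simp only [zero_mul, integral_zero]
      refine tendsto_nhds_unique (tendsto_integral_mul_arctan_div_mul (f := f) hpv) ?_
      refine (h.tendsto_integral_inv_one_add_sq_smul hp.continuous hp' v).neg.congr' ?_
      filter_upwards [self_mem_nhdsWithin] with δ hδ
      exact ((h.mul_arctan_div (ne_of_gt hδ)).2.2 p hp hp' v).symm
  filter_upwards [hzero.ae_eq_zero] with x hx hfx
  simpa [hfx] using hx

end ZeroSet

section IntegrationByParts

variable {E : Type*} [NormedAddCommGroup E] [InnerProductSpace ℝ E] [FiniteDimensional ℝ E]
  [MeasurableSpace E] [BorelSpace E] {μ : Measure E} [μ.IsAddHaarMeasure] {f : E → ℝ} {L : ℝ≥0}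

theorem abs_integral_fderiv_mul_le {w : E → ℝ} (hf : ContDiff ℝ 1 f) (hf' : HasCompactSupport f)
    (hw : LipschitzWith L w) (v : E) :
    |∫ x, fderiv ℝ f x v * w x ∂μ| ≤ L * ‖v‖ * ∫ x, |f x| ∂μ := by
  obtain ⟨D, hD⟩ := ContDiff.lipschitzWith_of_hasCompactSupport hf' hf one_ne_zero
  have hparts := hw.integral_lineDeriv_mul_eq (μ := μ) hD hf' (-v)
  simp only [neg_neg, (hf.differentiable one_ne_zero _).lineDeriv_eq_fderiv] at hparts
  rw [← hparts, ← integral_const_mul, ← Real.norm_eq_abs]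
  refine norm_integral_le_of_norm_le
    ((hf.continuous.integrable_of_hasCompactSupport hf').abs.const_mul _)
    (Eventually.of_forall fun x ↦ ?_)
  rw [norm_mul, Real.norm_eq_abs (f x), ← norm_neg v]
  gcongr
  exact norm_lineDeriv_le_of_lipschitz ℝ hw

theorem abs_integral_inner_gradient_le {w : E → E} (hf : ContDiff ℝ 1 f)
    (hf' : HasCompactSupport f) (hw : LipschitzWith L w) :
    |∫ x, ⟪gradient f x, w x⟫ ∂μ| ≤ Module.finrank ℝ E * L * ∫ x, |f x| ∂μ := by
  set e := stdOrthonormalBasis ℝ E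
  have hwi : ∀ i, LipschitzWith L fun x ↦ ⟪e i, w x⟫ := fun i ↦
    LipschitzWith.of_dist_le_mul fun x y ↦ by
      rw [dist_eq_norm, ← inner_sub_right]
      refine (norm_inner_le_norm _ _).trans ?_
      rw [e.orthonormal.1 i, one_mul, ← dist_eq_norm]
      exact hw.dist_le_mul x y
  have hexp : ∀ x, ⟪gradient f x, w x⟫ = ∑ i, fderiv ℝ f x (e i) * ⟪e i, w x⟫ := fun x ↦ by
    simp only [← inner_gradient_left, e.sum_inner_mul_inner]
  have hint : ∀ i, Integrable (fun x ↦ fderiv ℝ f x (e i) * ⟪e i, w x⟫) μ := fun i ↦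
    (((hf.continuous_fderiv one_ne_zero).clm_apply continuous_const).mul
      (hwi i).continuous).integrable_of_hasCompactSupport (hf'.fderiv_apply (𝕜 := ℝ) _).mul_right
  simp only [hexp]
  rw [integral_finsetSum _ fun i _ ↦ hint i]
  calc _ ≤ ∑ i, |∫ x, fderiv ℝ f x (e i) * ⟪e i, w x⟫ ∂μ| := Finset.abs_sum_le_sum_abs _ _
    _ ≤ ∑ _i : Fin (Module.finrank ℝ E), L * ∫ x, |f x| ∂μ := Finset.sum_le_sum fun i _ ↦ by
      simpa [e.orthonormal.1 i] using abs_integral_fderiv_mul_le (μ := μ) hf hf' (hwi i) (e i)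
    _ = _ := by simp [mul_assoc]

theorem abs_integral_inner_gradient_le_of_hasCompactSupport_right {w : E → E}
    (hf : ContDiff ℝ 1 f) (hfi : Integrable f μ) (hw : LipschitzWith L w)
    (hw' : HasCompactSupport w) :
    |∫ x, ⟪gradient f x, w x⟫ ∂μ| ≤ Module.finrank ℝ E * L * ∫ x, |f x| ∂μ := by
  obtain ⟨R, hR0, hR⟩ := hw'.isCompact.isBounded.subset_ball_lt 0 (0 : E)
  let χ : ContDiffBump (0 : E) := ⟨R, R + 1, hR0, by linarith⟩
  have hχf : ContDiff ℝ 1 fun x ↦ χ x * f x := χ.contDiff.mul hf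
  have hcongr : ∀ x, ⟪gradient (fun x ↦ χ x * f x) x, w x⟫ = ⟪gradient f x, w x⟫ := fun x ↦ by
    by_cases hx : x ∈ tsupport w
    · have : (fun y ↦ χ y * f y) =ᶠ[𝓝 x] f := by
        filter_upwards [χ.eventuallyEq_one_of_mem_ball (hR hx)] with y hy
        simp [hy]
      rw [this.gradient_eq]
    · simp [image_eq_zero_of_notMem_tsupport hx]
  have key := abs_integral_inner_gradient_le (μ := μ) hχf χ.hasCompactSupport.mul_right hw
  simp only [hcongr] at key
  refine key.trans (mul_le_mul_of_nonneg_left (integral_mono ?_ hfi.abs fun x ↦ ?_) (by positivity))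
  · exact (hχf.continuous.integrable_of_hasCompactSupport χ.hasCompactSupport.mul_right).abs
  · simpa only [abs_mul, abs_of_nonneg χ.nonneg] using
      mul_le_of_le_one_left (abs_nonneg _) χ.le_one

end IntegrationByParts

section LocallyIntegrablePairing

variable {X E F G : Type*} [TopologicalSpace X] [MeasurableSpace X] [OpensMeasurableSpace X]
  {μ : Measure X}

theorem integrable_inner_clm_apply_mul [T2Space X] [NormedAddCommGroup E] [InnerProductSpace ℝ E]
    {c : X → E →L[ℝ] E} {w : X → E} {m : X → ℝ} (hc : Continuous c) (hw : Continuous w)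
    (hw' : HasCompactSupport w) (hm : LocallyIntegrable m μ) :
    Integrable (fun x ↦ ⟪c x (w x), w x⟫ * m x) μ := by
  have hsupp : HasCompactSupport fun x ↦ ⟪c x (w x), w x⟫ := hw'.mono fun x hx ↦ by
    contrapose! hx
    rw [Function.notMem_support] at hx ⊢
    rw [hx, inner_zero_right]
  exact hm.integrable_smul_left_of_hasCompactSupport ((hc.clm_apply hw).inner hw) hsupp

variable [SecondCountableTopology X]

theorem integrable_inner_of_hasCompactSupport [T2Space X] [NormedAddCommGroup E]
    [InnerProductSpace ℝ E] {w V : X → E} (hw : Continuous w) (hw' : HasCompactSupport w)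
    (hV : LocallyIntegrable V μ) : Integrable (fun x ↦ ⟪w x, V x⟫) μ := by
  obtain ⟨C, hC⟩ := hw.bounded_above_of_compact_support hw'
  rw [← integrableOn_iff_integrable_of_support_subset (s := tsupport w)]
  · refine ((hV.integrableOn_isCompact hw').norm.const_mul C).mono'
      (hw.aestronglyMeasurable.inner hV.aestronglyMeasurable).restrict
      (Eventually.of_forall fun x ↦ (norm_inner_le_norm _ _).trans ?_)
    gcongr
    exact hC x
  · refine Function.support_subset_iff'.2 fun x hx ↦ ?_
    rw [image_eq_zero_of_notMem_tsupport hx, inner_zero_left]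

theorem locallyIntegrable_clm_apply [NormedAddCommGroup F] [NormedSpace ℝ F]
    [NormedAddCommGroup G] [NormedSpace ℝ G] {A : X → F →L[ℝ] G} {f : X → F} {C : ℝ}
    (hA : Continuous A) (hC : ∀ x, ‖A x‖ ≤ C)
    (hf : LocallyIntegrable f μ) : LocallyIntegrable (fun x ↦ A x (f x)) μ := by
  refine (hf.smul C).mono (isBoundedBilinearMap_apply.continuous.comp_aestronglyMeasurable
    (hA.aestronglyMeasurable.prodMk hf.aestronglyMeasurable)) (Eventually.of_forall fun x ↦ ?_)
  rw [Pi.smul_apply, norm_smul]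
  exact (A x).le_of_opNorm_le_of_le ((hC x).trans (le_abs_self C)) le_rfl

end LocallyIntegrablePairing

section Commutator

variable {E F G : Type*} [NormedAddCommGroup E] [NormedSpace ℝ E] [FiniteDimensional ℝ E]
  [MeasurableSpace E] [BorelSpace E] {μ : Measure E} [μ.IsAddHaarMeasure]
  [NormedAddCommGroup F] [NormedSpace ℝ F] [CompleteSpace F]
  [NormedAddCommGroup G] [NormedSpace ℝ G] [CompleteSpace G]
  {φ : ContDiffBump (0 : E)} {f : E → F}

theorem norm_mollify_sub_clm_apply_mollify_le (hf : LocallyIntegrable f μ) {W : E → G}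
    (hW : LocallyIntegrable W μ) (T : F →L[ℝ] G) {κ : ℝ} {x : E}
    (hκ : ∀ y, dist y x < φ.rOut → ‖W y - T (f y)‖ ≤ κ * ‖f y‖) :
    ‖mollify φ μ W x - T (mollify φ μ f x)‖ ≤ κ * mollify φ μ (fun y ↦ ‖f y‖) x := by
  rw [← mollify_clm_comp T hf]
  simp only [mollify_apply]
  rw [← integral_sub (integrable_normed_sub_smul hW x)
    (integrable_normed_sub_smul (locallyIntegrable_clm_comp T hf) x), ← integral_const_mul]
  refine norm_integral_le_of_norm_le
    ((integrable_normed_sub_smul (locallyIntegrable_norm hf) x).const_mul _)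
    (Eventually.of_forall fun y ↦ ?_)
  rw [← smul_sub, norm_smul, Real.norm_of_nonneg (φ.nonneg_normed _), smul_eq_mul,
    mul_left_comm]
  by_cases hy : dist y x < φ.rOut
  · exact mul_le_mul_of_nonneg_left (hκ y hy) (φ.nonneg_normed _)
  · have : φ.normed μ (x - y) = 0 := by
      rw [← Function.notMem_support, φ.support_normed_eq, mem_ball_zero_iff, ← dist_eq_norm]
      rwa [dist_comm] at hy
    simp only [this, zero_mul, le_refl]

theorem norm_mollify_clm_apply_sub_le {K : ℝ≥0} {A : E → F →L[ℝ] G} (hA : LipschitzWith K A)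
    (hf : LocallyIntegrable f μ) (hAf : LocallyIntegrable (fun y ↦ A y (f y)) μ) (x : E) :
    ‖mollify φ μ (fun y ↦ A y (f y)) x - A x (mollify φ μ f x)‖ ≤
      φ.rOut * K * mollify φ μ (fun y ↦ ‖f y‖) x := by
  refine norm_mollify_sub_clm_apply_mollify_le hf hAf (A x) fun y hy ↦ ?_
  rw [← sub_apply]
  refine (A y - A x).le_of_opNorm_le ?_ _
  rw [← dist_eq_norm, mul_comm]
  exact hA.dist_le_mul_of_le hy.le

theorem norm_mollify_smul_sub_le {K : ℝ≥0} {m : E → ℝ} {b : E → G} (hb : LipschitzWith K b)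
    (hm : LocallyIntegrable m μ) (x : E) :
    ‖mollify φ μ (fun y ↦ m y • b y) x - mollify φ μ m x • b x‖ ≤
      φ.rOut * K * mollify φ μ (fun y ↦ ‖m y‖) x := by
  refine norm_mollify_sub_clm_apply_mollify_le hm
    (LocallyIntegrable.smul_continuous hb.continuous hm) (toSpanSingleton ℝ (b x)) fun y hy ↦ ?_
  rw [toSpanSingleton_apply, ← smul_sub, norm_smul, mul_comm]
  gcongr
  rw [← dist_eq_norm, mul_comm]
  exact hb.dist_le_mul_of_le hy.le

end Commutator

/-- Symmetric operator fields with spectrum in `[θ, θ⁻¹]` and Lipschitz constant `K`. -/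
structure IsEllipticField {E : Type*} [NormedAddCommGroup E] [InnerProductSpace ℝ E] (θ : ℝ)
    (K : ℝ≥0) (c : E → E →L[ℝ] E) : Prop where
  pos : 0 < θ
  symm : ∀ x y z, ⟪c x y, z⟫ = ⟪y, c x z⟫
  lower : ∀ x y, θ * ‖y‖ ^ 2 ≤ ⟪c x y, y⟫
  upper : ∀ x y, ⟪c x y, y⟫ ≤ θ⁻¹ * ‖y‖ ^ 2
  lipschitz : LipschitzWith K c

namespace IsEllipticField

variable {E : Type*} [NormedAddCommGroup E] [InnerProductSpace ℝ E] {θ : ℝ} {K : ℝ≥0}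
  {c : E → E →L[ℝ] E}

theorem mul_norm_apply_le (h : IsEllipticField θ K c) (x y : E) : θ * ‖c x y‖ ≤ ‖y‖ := by
  have hθ := h.pos
  have hpos : 0 ≤ ⟪c x (y - θ • c x y), y - θ • c x y⟫ := le_trans (by positivity) (h.lower x _)
  have hexpand : ⟪c x (y - θ • c x y), y - θ • c x y⟫ =
      ⟪c x y, y⟫ - 2 * θ * ‖c x y‖ ^ 2 + θ * (θ * ⟪c x (c x y), c x y⟫) := by
    have : ⟪c x (c x y), y⟫ = ‖c x y‖ ^ 2 := by rw [h.symm, real_inner_self_eq_norm_sq]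
    simp only [map_sub, map_smul, inner_sub_left, inner_sub_right, real_inner_smul_left,
      real_inner_smul_right, this, real_inner_self_eq_norm_sq]
    ring
  have hquad : θ * ⟪c x (c x y), c x y⟫ ≤ ‖c x y‖ ^ 2 :=
    (mul_le_mul_of_nonneg_left (h.upper x (c x y)) hθ.le).trans_eq (mul_inv_cancel_left₀ hθ.ne' _)
  have hsq : θ * ‖c x y‖ ^ 2 ≤ θ⁻¹ * ‖y‖ ^ 2 := by
    linarith [mul_le_mul_of_nonneg_left hquad hθ.le, h.upper x y]
  refine le_of_sq_le_sq ?_ (norm_nonneg y)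
  calc (θ * ‖c x y‖) ^ 2 = θ * (θ * ‖c x y‖ ^ 2) := by ring
    _ ≤ θ * (θ⁻¹ * ‖y‖ ^ 2) := by gcongr
    _ = ‖y‖ ^ 2 := mul_inv_cancel_left₀ hθ.ne' _

theorem norm_apply_le (h : IsEllipticField θ K c) (x y : E) : ‖c x y‖ ≤ θ⁻¹ * ‖y‖ := by
  rw [← div_eq_inv_mul, le_div_iff₀' h.pos]
  exact h.mul_norm_apply_le x y

theorem norm_le (h : IsEllipticField θ K c) (x : E) : ‖c x‖ ≤ θ⁻¹ :=
  opNorm_le_bound _ (inv_nonneg.2 h.pos.le) (h.norm_apply_le x)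

theorem lipschitz_apply (h : IsEllipticField θ K c) {w : E → E} {η : ℝ≥0}
    (hw : LipschitzWith η w) (hw' : ∀ x, ‖w x‖ ≤ η) :
    LipschitzWith ((K + θ⁻¹.toNNReal) * η) fun x ↦ c x (w x) := by
  refine LipschitzWith.of_dist_le_mul fun x y ↦ ?_
  have hK := h.lipschitz.dist_le_mul x y
  have hη := hw.dist_le_mul x y
  have hθ := inv_nonneg.2 h.pos.le
  have hsplit : c x (w x) - c y (w y) = (c x - c y) (w x) + c y (w x - w y) := by simp
  rw [dist_eq_norm] at hK hη
  rw [dist_eq_norm, hsplit, NNReal.coe_mul, NNReal.coe_add, Real.coe_toNNReal _ hθ]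
  calc _ ≤ ‖c x - c y‖ * ‖w x‖ + θ⁻¹ * ‖w x - w y‖ :=
        (norm_add_le _ _).trans (add_le_add ((c x - c y).le_opNorm _) (h.norm_apply_le _ _))
    _ ≤ (K * dist x y) * η + θ⁻¹ * (η * dist x y) := by
        gcongr
        exact hw' x
    _ = _ := by ring

end IsEllipticField

section Flux

variable {E : Type*} [NormedAddCommGroup E] [InnerProductSpace ℝ E] {c : E → E →L[ℝ] E}
  {b Dm : E → E} {m : E → ℝ}

/-- The flux `½ c Dm + m b` of the density `m` with gradient `Dm`, for the diffusion matrix `c` and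
the drift `b`. -/
noncomputable def flux (c : E → E →L[ℝ] E) (b : E → E) (m : E → ℝ) (Dm : E → E) (x : E) : E :=
  (1 / 2 : ℝ) • c x (Dm x) + m x • b x

theorem continuous_flux (hc : Continuous c) (hb : Continuous b) (hm : Continuous m)
    (hDm : Continuous Dm) : Continuous (flux c b m Dm) :=
  ((hc.clm_apply hDm).fun_const_smul (1 / 2 : ℝ)).fun_add (hm.fun_smul hb)

variable [FiniteDimensional ℝ E] [MeasurableSpace E] [BorelSpace E] {μ : Measure E} {θ : ℝ}
  {K L : ℝ≥0}

theorem locallyIntegrable_flux [IsLocallyFiniteMeasure μ] (hc : IsEllipticField θ K c)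
    (hb : Continuous b) (hm : LocallyIntegrable m μ) (hDm : LocallyIntegrable Dm μ) :
    LocallyIntegrable (flux c b m Dm) μ :=
  ((locallyIntegrable_clm_apply hc.lipschitz.continuous hc.norm_le hDm).smul (1 / 2 : ℝ)).add
    (LocallyIntegrable.smul_continuous hb hm)

theorem norm_mollify_flux_sub_le [μ.IsAddHaarMeasure] {φ : ContDiffBump (0 : E)}
    (hc : IsEllipticField θ K c) (hb : LipschitzWith L b) (hm : LocallyIntegrable m μ)
    (hDm : LocallyIntegrable Dm μ) (x : E) :
    ‖mollify φ μ (flux c b m Dm) x - flux c b (mollify φ μ m) (mollify φ μ Dm) x‖ ≤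
      φ.rOut * (K * mollify φ μ (fun y ↦ ‖Dm y‖) x + L * mollify φ μ (fun y ↦ ‖m y‖) x) := by
  have hcD := locallyIntegrable_clm_apply hc.lipschitz.continuous hc.norm_le hDm
  have hsplit : mollify φ μ (flux c b m Dm) x =
      (1 / 2 : ℝ) • mollify φ μ (fun y ↦ c y (Dm y)) x + mollify φ μ (fun y ↦ m y • b y) x := by
    rw [← mollify_const_smul, ← mollify_add (hcD.smul (1 / 2 : ℝ))
      (LocallyIntegrable.smul_continuous hb.continuous hm)]
    rfl
  have hdiff := norm_mollify_clm_apply_sub_le (φ := φ) hc.lipschitz hDm hcD x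
  have hdrift := norm_mollify_smul_sub_le (φ := φ) hb hm x
  rw [hsplit, flux, add_sub_add_comm, ← smul_sub, mul_add, ← mul_assoc, ← mul_assoc]
  refine (norm_add_le _ _).trans (add_le_add (le_trans ?_ hdiff) hdrift)
  rw [norm_smul]
  exact mul_le_of_le_one_left (norm_nonneg _) (by norm_num)

end Flux

section MollifiedFunctional

variable {E : Type*} [NormedAddCommGroup E] [InnerProductSpace ℝ E] [FiniteDimensional ℝ E]
  [MeasurableSpace E] [BorelSpace E] {μ : Measure E} [μ.IsAddHaarMeasure] {θ : ℝ} {K : ℝ≥0}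
  {c : E → E →L[ℝ] E} {w : E → E} {m : E → ℝ}

theorem integral_quadratic_mollify_mul_le (hc : IsEllipticField θ K c) (hw : Continuous w)
    (hw' : HasCompactSupport w) (hm : LocallyIntegrable m μ) (hm0 : ∀ x, 0 ≤ m x)
    (φ : ContDiffBump (0 : E)) :
    ∫ x, ⟪c x (mollify φ μ w x), mollify φ μ w x⟫ * m x ∂μ ≤
      θ⁻¹ * ∫ x, ‖w x‖ ^ 2 * mollify φ μ m x ∂μ := by
  have hwi : LocallyIntegrable w μ := hw.locallyIntegrable
  have hsq' : HasCompactSupport fun x ↦ ‖w x‖ ^ 2 :=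
    hw'.comp_left (g := fun v ↦ ‖v‖ ^ 2) (by simp)
  have hsq : Integrable (fun x ↦ ‖w x‖ ^ 2) μ :=
    (hw.norm.pow 2).integrable_of_hasCompactSupport hsq'
  have hmsq : Integrable (fun x ↦ mollify φ μ (fun x ↦ ‖w x‖ ^ 2) x * m x) μ :=
    hm.integrable_smul_left_of_hasCompactSupport (continuous_mollify hsq.locallyIntegrable)
      (hasCompactSupport_mollify hsq')
  rw [← integral_mollify_mul hsq hsq' hm, ← integral_const_mul]
  refine integral_mono (integrable_inner_clm_apply_mul hc.lipschitz.continuous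
    (continuous_mollify hwi) (hasCompactSupport_mollify hw') hm) (hmsq.const_mul _) fun x ↦ ?_
  rw [← mul_assoc]
  refine mul_le_mul_of_nonneg_right ((hc.upper x _).trans ?_) (hm0 x)
  exact mul_le_mul_of_nonneg_left (sq_norm_mollify_le hwi hsq.locallyIntegrable x)
    (inv_nonneg.2 hc.pos.le)

end MollifiedFunctional

section VariationalFunctional

variable {E : Type*} [NormedAddCommGroup E] [InnerProductSpace ℝ E] [CompleteSpace E]
  [SecondCountableTopology E] [MeasurableSpace E] [OpensMeasurableSpace E] {μ : Measure E}
  {c : E → E →L[ℝ] E} {V : E → E} {m : E → ℝ} {F : ℝ}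

/-- `F` bounds `∫ ⟪Dh, V⟫ - ½ ⟪c Dh, Dh⟫ m` over all test functions `h` of class `C¹₀`. -/
def IsVariationalBound (μ : Measure E) (c : E → E →L[ℝ] E) (V : E → E) (m : E → ℝ) (F : ℝ) :
    Prop :=
  ∀ h : E → ℝ, ContDiff ℝ 1 h → HasCompactSupport h →
    ∫ x, (⟪gradient h x, V x⟫ - 1 / 2 * ⟪c x (gradient h x), gradient h x⟫ * m x) ∂μ ≤ F

theorem IsVariationalBound.mul_sub_le (hF : IsVariationalBound μ c V m F) (hc : Continuous c)
    (hV : LocallyIntegrable V μ) (hm : LocallyIntegrable m μ) {h : E → ℝ} (hh : ContDiff ℝ 1 h)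
    (hh' : HasCompactSupport h) (a : ℝ) :
    a * (∫ x, ⟪gradient h x, V x⟫ ∂μ) -
      a ^ 2 / 2 * ∫ x, ⟪c x (gradient h x), gradient h x⟫ * m x ∂μ ≤ F := by
  have hgrad : ∀ x, gradient (fun y ↦ a * h y) x = a • gradient h x := fun x ↦
    (hasGradientAt_comp_of_hasDerivAt (hasDerivAt_const_mul a)
      (hasGradientAt_gradient_of_contDiff hh x)).gradient
  have hcont := continuous_gradient_of_contDiff hh
  have hsupp := hasCompactSupport_gradient hh'
  refine le_trans (le_of_eq ?_) (hF (fun x ↦ a * h x) (contDiff_const.mul hh) hh'.mul_left)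
  rw [← integral_const_mul, ← integral_const_mul, ← integral_sub
    ((integrable_inner_of_hasCompactSupport hcont hsupp hV).const_mul _)
    ((integrable_inner_clm_apply_mul hc hcont hsupp hm).const_mul _)]
  congr 1 with x
  simp only [hgrad, map_smul, real_inner_smul_left, real_inner_smul_right]
  ring

end VariationalFunctional

section Euclidean

variable {c : EuclideanSpace ℝ (Fin l) →
    (EuclideanSpace ℝ (Fin l) →L[ℝ] EuclideanSpace ℝ (Fin l))}

theorem norm_matDiv_le {K : ℝ} (h : ∀ x, ‖fderiv ℝ c x‖ ≤ K) (x : EuclideanSpace ℝ (Fin l)) :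
    ‖matDiv c x‖ ≤ l * K := by
  refine (norm_sum_le_of_le (f := fun j ↦ fderiv ℝ c x (EuclideanSpace.single j 1)
    (EuclideanSpace.single j 1)) Finset.univ fun j _ ↦ ?_).trans_eq (b := ∑ _j : Fin l, K) (by simp)
  simpa using (fderiv ℝ c x).le_of_opNorm₂_le_of_le (h x)
    (PiLp.norm_single 2 _ j (1 : ℝ)).le (PiLp.norm_single 2 _ j (1 : ℝ)).le

theorem lipschitzWith_matDiv {K : ℝ≥0} (h : LipschitzWith K (fderiv ℝ c)) :
    LipschitzWith (l * K) (matDiv c) := by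
  refine LipschitzWith.of_dist_le_mul fun x y ↦ ?_
  rw [dist_eq_norm, matDiv, matDiv, ← Finset.sum_sub_distrib]
  refine (norm_sum_le_of_le Finset.univ fun j _ ↦ ?_).trans_eq (b := ∑ _j : Fin l, K * dist x y)
    (by simp [mul_assoc])
  simpa [← dist_eq_norm] using (fderiv ℝ c x - fderiv ℝ c y).le_of_opNorm₂_le_of_le
    ((dist_eq_norm _ _).ge.trans (h.dist_le_mul x y))
    (PiLp.norm_single 2 _ j (1 : ℝ)).le (PiLp.norm_single 2 _ j (1 : ℝ)).le

theorem IsVariationalBound.mollify_mul_sub_le {θ F : ℝ} {K : ℝ≥0}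
    {V : EuclideanSpace ℝ (Fin l) → EuclideanSpace ℝ (Fin l)} {m k : EuclideanSpace ℝ (Fin l) → ℝ}
    (hF : IsVariationalBound volume c V m F) (hc : IsEllipticField θ K c)
    (hV : LocallyIntegrable V) (hm : LocallyIntegrable m) (hm0 : ∀ x, 0 ≤ m x)
    (hk : ContDiff ℝ 1 k) (hk' : HasCompactSupport k)
    (φ : ContDiffBump (0 : EuclideanSpace ℝ (Fin l))) (a : ℝ) :
    a * (∫ x, ⟪gradient k x, mollify φ volume V x⟫) -
      a ^ 2 / 2 * (θ⁻¹ * ∫ x, ‖gradient k x‖ ^ 2 * mollify φ volume m x) ≤ F := by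
  have hcont := continuous_gradient_of_contDiff hk
  have hsupp := hasCompactSupport_gradient hk'
  have hgrad := (hasWeakGrad_gradient_of_contDiff hk).gradient_mollify φ
  have htest := hF.mul_sub_le hc.lipschitz.continuous hV hm
    ((contDiff_mollify hk.continuous.locallyIntegrable).of_le (mod_cast le_top))
    (hasCompactSupport_mollify hk') a (h := mollify φ volume k)
  rw [hgrad, integral_inner_mollify (hcont.integrable_of_hasCompactSupport hsupp) hsupp hV] at htest
  exact (sub_le_sub_left (mul_le_mul_of_nonneg_left
    (integral_quadratic_mollify_mul_le hc hcont hsupp hm hm0 φ) (by positivity)) _).trans htest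

end Euclidean

section Primitive

/-- The primitive of `g` that vanishes at `0`. -/
noncomputable def primitive (g : ℝ → ℝ) (r : ℝ) : ℝ := ∫ s in (0 : ℝ)..r, g s

variable {g h : ℝ → ℝ} {r : ℝ}

theorem hasDerivAt_primitive (hg : Continuous g) (r : ℝ) : HasDerivAt (primitive g) (g r) r :=
  (hg.integral_hasStrictDerivAt 0 r).hasDerivAt

theorem contDiff_primitive (hg : Continuous g) : ContDiff ℝ 1 (primitive g) := by
  have hderiv : deriv (primitive g) = g := funext fun r ↦ (hasDerivAt_primitive hg r).deriv
  exact contDiff_one_iff_deriv.2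
    ⟨fun r ↦ (hasDerivAt_primitive hg r).differentiableAt, by rwa [hderiv]⟩

theorem primitive_nonneg (hg : ∀ s, 0 ≤ s → 0 ≤ g s) (hr : 0 ≤ r) : 0 ≤ primitive g r :=
  intervalIntegral.integral_nonneg hr fun s hs ↦ hg s hs.1

theorem primitive_mono (hg : Continuous g) (hh : Continuous h) (hgh : ∀ s, 0 ≤ s → g s ≤ h s)
    (hr : 0 ≤ r) : primitive g r ≤ primitive h r :=
  intervalIntegral.integral_mono_on hr (hg.intervalIntegrable _ _) (hh.intervalIntegrable _ _)
    fun s hs ↦ hgh s hs.1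

end Primitive

/-- A continuous minorant `g` of `r ↦ r⁻¹` on `[0, ∞)` whose primitive is bounded by `M`. The
primitive serves as a bounded substitute for the logarithm. -/
structure IsTruncatedInv (M : ℝ) (g : ℝ → ℝ) : Prop where
  continuous : Continuous g
  nonneg : ∀ r, 0 ≤ r → 0 ≤ g r
  mul_le_one : ∀ r, 0 ≤ r → r * g r ≤ 1
  primitive_le : ∀ r, 0 ≤ r → primitive g r ≤ M

namespace IsTruncatedInv

variable {M r : ℝ} {g : ℝ → ℝ}

theorem bound_nonneg (h : IsTruncatedInv M g) : 0 ≤ M :=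
  (primitive_nonneg h.nonneg le_rfl).trans (h.primitive_le 0 le_rfl)

theorem continuous_id_mul (h : IsTruncatedInv M g) : Continuous fun s ↦ s * g s :=
  continuous_id.mul h.continuous

theorem primitive_id_mul_nonneg (h : IsTruncatedInv M g) (hr : 0 ≤ r) :
    0 ≤ primitive (fun s ↦ s * g s) r :=
  primitive_nonneg (fun s hs ↦ mul_nonneg hs (h.nonneg s hs)) hr

theorem primitive_id_mul_le (h : IsTruncatedInv M g) (hr : 0 ≤ r) :
    primitive (fun s ↦ s * g s) r ≤ r :=
  (primitive_mono h.continuous_id_mul continuous_const h.mul_le_one hr).trans_eq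
    (by simp [primitive])

theorem abs_mul_primitive_sub_le (h : IsTruncatedInv M g) (hr : 0 ≤ r) :
    |r * primitive g r - primitive (fun s ↦ s * g s) r| ≤ (M + 1) * r := by
  have hlow := mul_nonneg hr (primitive_nonneg h.nonneg hr)
  have hupp := mul_le_mul_of_nonneg_left (h.primitive_le r hr) hr
  rw [abs_le]
  constructor <;> linarith [h.primitive_id_mul_nonneg hr, h.primitive_id_mul_le hr,
    mul_nonneg h.bound_nonneg hr]

end IsTruncatedInv

/-- A cutoff function `ψ` such that `(1 + ‖x‖) ‖∇ψ x‖` and the Lipschitz constant of `∇ψ` are at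
most `η`; the weight absorbs the linear growth of the drift. -/
structure IsCutoff {E : Type*} [NormedAddCommGroup E] [InnerProductSpace ℝ E] [CompleteSpace E]
    (η : ℝ≥0) (ψ : E → ℝ) : Prop where
  contDiff : ContDiff ℝ 1 ψ
  hasCompactSupport : HasCompactSupport ψ
  nonneg : ∀ x, 0 ≤ ψ x
  le_one : ∀ x, ψ x ≤ 1
  norm_gradient_mul_le : ∀ x, ‖gradient ψ x‖ * (1 + ‖x‖) ≤ η
  lipschitz : LipschitzWith η (gradient ψ)

theorem IsCutoff.norm_gradient_le {E : Type*} [NormedAddCommGroup E] [InnerProductSpace ℝ E]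
    [CompleteSpace E] {η : ℝ≥0} {ψ : E → ℝ} (h : IsCutoff η ψ) (x : E) : ‖gradient ψ x‖ ≤ η :=
  (le_mul_of_one_le_right (norm_nonneg _) (le_add_of_nonneg_right (norm_nonneg x))).trans
    (h.norm_gradient_mul_le x)

section TestFunction

/-- The localised test function `ψ · G(u)`, where `G` is the primitive of `g`. -/
noncomputable def testFunction {X : Type*} (g : ℝ → ℝ) (ψ u : X → ℝ) (x : X) : ℝ :=
  ψ x * primitive g (u x)

variable {M : ℝ} {η : ℝ≥0} {g : ℝ → ℝ}

theorem hasCompactSupport_testFunction {X : Type*} [TopologicalSpace X] {ψ u : X → ℝ}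
    (hψ : HasCompactSupport ψ) : HasCompactSupport (testFunction g ψ u) :=
  hψ.mul_right

theorem tsupport_testFunction_subset {X : Type*} [TopologicalSpace X] {ψ u : X → ℝ} :
    tsupport (testFunction g ψ u) ⊆ tsupport ψ :=
  tsupport_mul_subset_left

variable {E : Type*} [NormedAddCommGroup E]

theorem contDiff_testFunction [NormedSpace ℝ E] {ψ u : E → ℝ} (hg : Continuous g)
    (hψ : ContDiff ℝ 1 ψ) (hu : ContDiff ℝ 1 u) : ContDiff ℝ 1 (testFunction g ψ u) :=
  hψ.mul ((contDiff_primitive hg).comp hu)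

variable [InnerProductSpace ℝ E] [CompleteSpace E] {ψ u : E → ℝ}

theorem gradient_testFunction (hg : Continuous g) (hψ : ContDiff ℝ 1 ψ) (hu : ContDiff ℝ 1 u)
    (x : E) : gradient (testFunction g ψ u) x =
      (ψ x * g (u x)) • gradient u x + primitive g (u x) • gradient ψ x := by
  rw [mul_smul]
  exact (hasGradientAt_mul (hasGradientAt_gradient_of_contDiff hψ x)
    (hasGradientAt_comp_of_hasDerivAt (hasDerivAt_primitive hg _)
      (hasGradientAt_gradient_of_contDiff hu x))).gradient

theorem gradient_mul_primitive_sub (hg : Continuous g) (hu : ContDiff ℝ 1 u) (x : E) :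
    gradient (fun x ↦ u x * primitive g (u x) - primitive (fun s ↦ s * g s) (u x)) x =
      primitive g (u x) • gradient u x := by
  have hderiv : HasDerivAt (fun r ↦ r * primitive g r - primitive (fun s ↦ s * g s) r)
      (primitive g (u x)) (u x) :=
    (((hasDerivAt_id _).fun_mul (hasDerivAt_primitive hg _)).fun_sub
      (hasDerivAt_primitive (continuous_id.mul hg) _)).congr_deriv (by simp)
  exact (hasGradientAt_comp_of_hasDerivAt hderiv
    (hasGradientAt_gradient_of_contDiff hu x)).gradient

theorem norm_primitive_smul_gradient_le (hg : IsTruncatedInv M g) (hψ : IsCutoff η ψ)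
    (hη : (M + 1) * η ≤ 1) {r : ℝ} (hr : 0 ≤ r) (x : E) :
    ‖primitive g r • gradient ψ x‖ ≤ 1 := by
  rw [norm_smul, Real.norm_of_nonneg (primitive_nonneg hg.nonneg hr)]
  calc primitive g r * ‖gradient ψ x‖ ≤ M * η :=
        mul_le_mul (hg.primitive_le r hr) (hψ.norm_gradient_le x) (norm_nonneg _) hg.bound_nonneg
    _ ≤ 1 := by linarith [η.2]

theorem norm_gradient_testFunction_le (hg : IsTruncatedInv M g) (hψ : IsCutoff η ψ)
    (hη : (M + 1) * η ≤ 1) (hu : ContDiff ℝ 1 u) (hu0 : ∀ x, 0 ≤ u x) (x : E) :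
    ‖gradient (testFunction g ψ u) x‖ ≤ g (u x) * ‖gradient u x‖ + 1 := by
  have hgu := hg.nonneg _ (hu0 x)
  rw [gradient_testFunction hg.continuous hψ.contDiff hu]
  refine norm_add_le_of_le ?_ (norm_primitive_smul_gradient_le hg hψ hη (hu0 x) x)
  rw [norm_smul, Real.norm_of_nonneg (mul_nonneg (hψ.nonneg x) hgu)]
  gcongr
  exact mul_le_of_le_one_left hgu (hψ.le_one x)

theorem sq_norm_gradient_testFunction_mul_le (hg : IsTruncatedInv M g) (hψ : IsCutoff η ψ)
    (hη : (M + 1) * η ≤ 1) (hu : ContDiff ℝ 1 u) (hu0 : ∀ x, 0 ≤ u x) (x : E) :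
    ‖gradient (testFunction g ψ u) x‖ ^ 2 * u x ≤
      2 * (ψ x * g (u x) * ‖gradient u x‖ ^ 2) + 2 * u x := by
  have hux := hu0 x
  have hγ := hg.nonneg _ hux
  have hψx := hψ.nonneg x
  rw [gradient_testFunction hg.continuous hψ.contDiff hu]
  set p := (ψ x * g (u x)) • gradient u x with hp
  set q := primitive g (u x) • gradient ψ x
  have hq : ‖q‖ ^ 2 ≤ 1 :=
    pow_le_one₀ (norm_nonneg _) (norm_primitive_smul_gradient_le hg hψ hη hux x)
  have hpq : ‖p + q‖ ^ 2 ≤ 2 * (‖p‖ ^ 2 + ‖q‖ ^ 2) :=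
    (pow_le_pow_left₀ (norm_nonneg _) (norm_add_le p q) 2).trans (add_sq_le)
  have hpu : ‖p‖ ^ 2 * u x ≤ ψ x * g (u x) * ‖gradient u x‖ ^ 2 := by
    rw [hp, norm_smul, Real.norm_of_nonneg (mul_nonneg hψx hγ)]
    calc _ = ψ x * g (u x) * ‖gradient u x‖ ^ 2 * (ψ x * (u x * g (u x))) := by ring
      _ ≤ ψ x * g (u x) * ‖gradient u x‖ ^ 2 :=
        mul_le_of_le_one_right (by positivity)
          (mul_le_one₀ (hψ.le_one x) (mul_nonneg hux hγ) (hg.mul_le_one _ hux))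
  calc ‖p + q‖ ^ 2 * u x ≤ 2 * (‖p‖ ^ 2 + ‖q‖ ^ 2) * u x := by gcongr
    _ = 2 * (‖p‖ ^ 2 * u x) + 2 * (‖q‖ ^ 2 * u x) := by ring
    _ ≤ 2 * (ψ x * g (u x) * ‖gradient u x‖ ^ 2) + 2 * u x := by
      gcongr
      exact mul_le_of_le_one_left hux hq

theorem abs_mul_primitive_sub_mul_inner_gradient_le {B r : ℝ} {b : E → E}
    (hbB : ∀ x, ‖b x‖ ≤ B * (1 + ‖x‖)) (hg : IsTruncatedInv M g) (hψ : IsCutoff η ψ)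
    (hη : (M + 1) * η ≤ 1) (hr : 0 ≤ r) (x : E) :
    |(r * primitive g r - primitive (fun s ↦ s * g s) r) * ⟪gradient ψ x, b x⟫| ≤ B * r := by
  have hB : 0 ≤ B := by simpa using (norm_nonneg _).trans (hbB 0)
  have hM := hg.bound_nonneg
  have hgrowth : |⟪gradient ψ x, b x⟫| ≤ B * η :=
    calc |⟪gradient ψ x, b x⟫| ≤ ‖gradient ψ x‖ * (B * (1 + ‖x‖)) :=
          (abs_real_inner_le_norm _ _).trans (by gcongr; exact hbB x)
      _ = B * (‖gradient ψ x‖ * (1 + ‖x‖)) := by ring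
      _ ≤ B * η := by gcongr; exact hψ.norm_gradient_mul_le x
  rw [abs_mul]
  calc _ ≤ (M + 1) * r * (B * η) := by
        gcongr
        exact hg.abs_mul_primitive_sub_le hr
    _ = B * r * ((M + 1) * η) := by ring
    _ ≤ B * r := mul_le_of_le_one_right (by positivity) hη

end TestFunction

section TruncatedFisher

variable {E : Type*} [NormedAddCommGroup E] [MeasurableSpace E] {μ : Measure E} {M : ℝ} {η : ℝ≥0}
  {g : ℝ → ℝ} {ψ u : E → ℝ}

/-- The Fisher information of a density `u` with gradient `v`, truncated by replacing `1 / u` by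
`g ∘ u` and localised by `ψ`. -/
noncomputable def truncatedFisher (μ : Measure E) (g : ℝ → ℝ) (ψ u : E → ℝ) (v : E → E) : ℝ :=
  ∫ x, ψ x * g (u x) * ‖v x‖ ^ 2 ∂μ

variable [OpensMeasurableSpace E] [IsFiniteMeasureOnCompacts μ]

theorem integrable_truncatedFisher {v : E → E} (hg : Continuous g) (hψ : Continuous ψ)
    (hψ' : HasCompactSupport ψ) (hu : Continuous u) (hv : Continuous v) :
    Integrable (fun x ↦ ψ x * g (u x) * ‖v x‖ ^ 2) μ :=
  ((hψ.mul (hg.comp hu)).mul (hv.norm.pow 2)).integrable_of_hasCompactSupport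
    hψ'.mul_right.mul_right

theorem integrable_inner_gradient_testFunction [InnerProductSpace ℝ E] [CompleteSpace E]
    {W : E → E} (hg : Continuous g) (hψ : ContDiff ℝ 1 ψ)
    (hψ' : HasCompactSupport ψ) (hu : ContDiff ℝ 1 u) (hW : Continuous W) :
    Integrable (fun x ↦ ⟪gradient (testFunction g ψ u) x, W x⟫) μ :=
  ((continuous_gradient_of_contDiff (contDiff_testFunction hg hψ hu)).inner
    hW).integrable_of_hasCompactSupport (HasCompactSupport.intro
      (hasCompactSupport_gradient (hasCompactSupport_testFunction (g := g) (u := u) hψ'))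
      fun x hx ↦ by rw [image_eq_zero_of_notMem_tsupport hx, inner_zero_left])

theorem integral_sq_norm_gradient_testFunction_mul_le [InnerProductSpace ℝ E] [CompleteSpace E]
    (hg : IsTruncatedInv M g) (hψ : IsCutoff η ψ) (hη : (M + 1) * η ≤ 1) (hu : ContDiff ℝ 1 u)
    (hu0 : ∀ x, 0 ≤ u x) (hui : Integrable u μ) :
    ∫ x, ‖gradient (testFunction g ψ u) x‖ ^ 2 * u x ∂μ ≤
      2 * truncatedFisher μ g ψ u (gradient u) + 2 * ∫ x, u x ∂μ := by
  have hfisher := integrable_truncatedFisher (μ := μ) hg.continuous hψ.contDiff.continuous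
    hψ.hasCompactSupport hu.continuous (continuous_gradient_of_contDiff hu)
  have hsupp : HasCompactSupport fun x ↦ ‖gradient (testFunction g ψ u) x‖ ^ 2 :=
    (hasCompactSupport_gradient (hasCompactSupport_testFunction hψ.hasCompactSupport)).comp_left
      (g := fun v ↦ ‖v‖ ^ 2) (by simp)
  have hint : Integrable (fun x ↦ ‖gradient (testFunction g ψ u) x‖ ^ 2 * u x) μ :=
    (((continuous_gradient_of_contDiff (contDiff_testFunction hg.continuous hψ.contDiff
      hu)).norm.pow 2).mul hu.continuous).integrable_of_hasCompactSupport hsupp.mul_right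
  rw [truncatedFisher, ← integral_const_mul, ← integral_const_mul,
    ← integral_add (hfisher.const_mul 2) (hui.const_mul 2)]
  exact integral_mono hint ((hfisher.const_mul 2).add (hui.const_mul 2))
    (sq_norm_gradient_testFunction_mul_le hg hψ hη hu hu0)

end TruncatedFisher

section EnergyInequality

variable {E : Type*} [NormedAddCommGroup E] [InnerProductSpace ℝ E] [FiniteDimensional ℝ E]
  [MeasurableSpace E] [BorelSpace E] {μ : Measure E} [μ.IsAddHaarMeasure]
  {M θ B : ℝ} {K L η : ℝ≥0} {g : ℝ → ℝ} {ψ u : E → ℝ} {c : E → E →L[ℝ] E} {b : E → E}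

theorem abs_integral_inner_gradient_mul_primitive_sub_le (hc : IsEllipticField θ K c)
    (hg : IsTruncatedInv M g) (hψ : IsCutoff η ψ) (hη : (M + 1) * η ≤ 1) (hu : ContDiff ℝ 1 u)
    (hu0 : ∀ x, 0 ≤ u x) (hui : Integrable u μ) :
    |∫ x, ⟪primitive g (u x) • gradient u x, c x (gradient ψ x)⟫ ∂μ| ≤
      Module.finrank ℝ E * (K + θ⁻¹) * ∫ x, u x ∂μ := by
  set f : E → ℝ := fun x ↦ u x * primitive g (u x) - primitive (fun s ↦ s * g s) (u x)
  have hf : ContDiff ℝ 1 f := (hu.mul ((contDiff_primitive hg.continuous).comp hu)).sub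
    ((contDiff_primitive hg.continuous_id_mul).comp hu)
  have hfu : ∀ x, |f x| ≤ (M + 1) * u x := fun x ↦ hg.abs_mul_primitive_sub_le (hu0 x)
  have hfi : Integrable f μ := (hui.const_mul (M + 1)).mono' hf.continuous.aestronglyMeasurable
    (Eventually.of_forall hfu)
  have hsupp : HasCompactSupport fun x ↦ c x (gradient ψ x) :=
    HasCompactSupport.intro hψ.hasCompactSupport fun x hx ↦ by
      rw [gradient_eq_zero_of_notMem_tsupport hx, map_zero]
  have hθ := inv_nonneg.2 hc.pos.le
  have hparts := abs_integral_inner_gradient_le_of_hasCompactSupport_right hf hfi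
    (hc.lipschitz_apply hψ.lipschitz hψ.norm_gradient_le) hsupp
  simp only [f, gradient_mul_primitive_sub hg.continuous hu] at hparts
  rw [NNReal.coe_mul, NNReal.coe_add, Real.coe_toNNReal _ hθ] at hparts
  have hu1 : 0 ≤ ∫ x, u x ∂μ := integral_nonneg hu0
  calc _ ≤ Module.finrank ℝ E * ((K + θ⁻¹) * η) * ∫ x, |f x| ∂μ := hparts
    _ ≤ Module.finrank ℝ E * ((K + θ⁻¹) * η) * ∫ x, (M + 1) * u x ∂μ :=
      mul_le_mul_of_nonneg_left (integral_mono hfi.abs (hui.const_mul _) hfu) (by positivity)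
    _ = Module.finrank ℝ E * (K + θ⁻¹) * (∫ x, u x ∂μ) * ((M + 1) * η) := by
      rw [integral_const_mul]
      ring
    _ ≤ _ := mul_le_of_le_one_right (by positivity) hη

theorem le_integral_inner_gradient_testFunction_diffusion (hc : IsEllipticField θ K c)
    (hg : IsTruncatedInv M g) (hψ : IsCutoff η ψ) (hη : (M + 1) * η ≤ 1) (hu : ContDiff ℝ 1 u)
    (hu0 : ∀ x, 0 ≤ u x) (hui : Integrable u μ) :
    θ * truncatedFisher μ g ψ u (gradient u) - Module.finrank ℝ E * (K + θ⁻¹) * ∫ x, u x ∂μ ≤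
      ∫ x, ⟪gradient (testFunction g ψ u) x, c x (gradient u x)⟫ ∂μ := by
  have hcont := continuous_gradient_of_contDiff hu
  have hcψ := hc.lipschitz.continuous.clm_apply (continuous_gradient_of_contDiff hψ.contDiff)
  have hsupp := hasCompactSupport_gradient hψ.hasCompactSupport
  have hfisher := integrable_truncatedFisher (μ := μ) hg.continuous hψ.contDiff.continuous
    hψ.hasCompactSupport hu.continuous hcont
  have hcross : Integrable
      (fun x ↦ ⟪primitive g (u x) • gradient u x, c x (gradient ψ x)⟫) μ := by
    have hP := ((contDiff_primitive hg.continuous).continuous.comp hu.continuous).smul hcont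
    refine (hP.inner hcψ).integrable_of_hasCompactSupport
      (HasCompactSupport.intro hsupp fun x hx ↦ ?_)
    rw [image_eq_zero_of_notMem_tsupport hx, map_zero, inner_zero_right]
  have hint := integrable_inner_gradient_testFunction (μ := μ) hg.continuous hψ.contDiff
    hψ.hasCompactSupport hu (hc.lipschitz.continuous.clm_apply hcont)
  have hpoint : ∀ x, θ * (ψ x * g (u x) * ‖gradient u x‖ ^ 2) +
      ⟪primitive g (u x) • gradient u x, c x (gradient ψ x)⟫ ≤
      ⟪gradient (testFunction g ψ u) x, c x (gradient u x)⟫ := fun x ↦ by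
    have hell := mul_le_mul_of_nonneg_left (hc.lower x (gradient u x))
      (mul_nonneg (hψ.nonneg x) (hg.nonneg _ (hu0 x)))
    rw [gradient_testFunction hg.continuous hψ.contDiff hu]
    simp only [inner_add_left, real_inner_smul_left]
    rw [← hc.symm x (gradient ψ x) (gradient u x), real_inner_comm (c x (gradient u x)),
      real_inner_comm (c x (gradient ψ x))]
    linarith
  have hmono := integral_mono ((hfisher.const_mul θ).add hcross) hint hpoint
  simp only [Pi.add_apply] at hmono
  rw [integral_add (hfisher.const_mul θ) hcross, integral_const_mul] at hmono
  rw [truncatedFisher]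
  linarith [neg_le_of_abs_le
    (abs_integral_inner_gradient_mul_primitive_sub_le hc hg hψ hη hu hu0 hui)]

theorem neg_le_integral_inner_gradient_testFunction_drift (hb : LipschitzWith L b)
    (hbB : ∀ x, ‖b x‖ ≤ B * (1 + ‖x‖)) (hg : IsTruncatedInv M g) (hψ : IsCutoff η ψ)
    (hη : (M + 1) * η ≤ 1) (hu : ContDiff ℝ 1 u) (hu0 : ∀ x, 0 ≤ u x) (hui : Integrable u μ) :
    -((Module.finrank ℝ E * L + B) * ∫ x, u x ∂μ) ≤
      ∫ x, ⟪gradient (testFunction g ψ u) x, u x • b x⟫ ∂μ := by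
  set k := testFunction (fun s ↦ s * g s) ψ u
  have hk : ContDiff ℝ 1 k := contDiff_testFunction hg.continuous_id_mul hψ.contDiff hu
  have hk' : HasCompactSupport k := hasCompactSupport_testFunction hψ.hasCompactSupport
  have hku : ∀ x, |k x| ≤ u x := fun x ↦ by
    have hP := hg.primitive_id_mul_nonneg (hu0 x)
    rw [show k x = ψ x * primitive (fun s ↦ s * g s) (u x) from rfl,
      abs_of_nonneg (mul_nonneg (hψ.nonneg x) hP)]
    exact (mul_le_of_le_one_left hP (hψ.le_one x)).trans (hg.primitive_id_mul_le (hu0 x))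
  have hparts : |∫ x, ⟪gradient k x, b x⟫ ∂μ| ≤ Module.finrank ℝ E * L * ∫ x, u x ∂μ :=
    (abs_integral_inner_gradient_le hk hk' hb).trans (mul_le_mul_of_nonneg_left
      (integral_mono (hk.continuous.integrable_of_hasCompactSupport hk').abs hui hku)
      (by positivity))
  have hki := integrable_inner_gradient_testFunction (μ := μ) hg.continuous_id_mul hψ.contDiff
    hψ.hasCompactSupport hu hb.continuous
  have hint := integrable_inner_gradient_testFunction (μ := μ) hg.continuous hψ.contDiff
    hψ.hasCompactSupport hu (hu.continuous.fun_smul hb.continuous)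
  have hpoint : ∀ x, ⟪gradient k x, b x⟫ - B * u x ≤
      ⟪gradient (testFunction g ψ u) x, u x • b x⟫ := fun x ↦ by
    have hrem := neg_le_of_abs_le (abs_mul_primitive_sub_mul_inner_gradient_le hbB hg hψ hη
      (hu0 x) x)
    rw [gradient_testFunction hg.continuous hψ.contDiff hu,
      gradient_testFunction hg.continuous_id_mul hψ.contDiff hu]
    simp only [inner_add_left, real_inner_smul_left, real_inner_smul_right]
    linarith
  have hmono := integral_mono (hki.sub (hui.const_mul B)) hint hpoint
  simp only [Pi.sub_apply] at hmono
  rw [integral_sub hki (hui.const_mul B), integral_const_mul] at hmono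
  linarith [neg_le_of_abs_le hparts]

end EnergyInequality

section FluxEnergy

variable {E : Type*} [NormedAddCommGroup E] [InnerProductSpace ℝ E] [FiniteDimensional ℝ E]
  [MeasurableSpace E] [BorelSpace E] {μ : Measure E} [μ.IsAddHaarMeasure]
  {M θ B : ℝ} {K L η : ℝ≥0} {g : ℝ → ℝ} {ψ u : E → ℝ} {c : E → E →L[ℝ] E} {b : E → E}

theorem le_integral_inner_gradient_testFunction_flux (hc : IsEllipticField θ K c)
    (hb : LipschitzWith L b) (hbB : ∀ x, ‖b x‖ ≤ B * (1 + ‖x‖)) (hg : IsTruncatedInv M g)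
    (hψ : IsCutoff η ψ) (hη : (M + 1) * η ≤ 1) (hu : ContDiff ℝ 1 u) (hu0 : ∀ x, 0 ≤ u x)
    (hui : Integrable u μ) :
    θ / 2 * truncatedFisher μ g ψ u (gradient u) -
        (Module.finrank ℝ E * ((K + θ⁻¹) / 2 + L) + B) * ∫ x, u x ∂μ ≤
      ∫ x, ⟪gradient (testFunction g ψ u) x, flux c b u (gradient u) x⟫ ∂μ := by
  have hdiffusion := le_integral_inner_gradient_testFunction_diffusion hc hg hψ hη hu hu0 hui
  have hdrift := neg_le_integral_inner_gradient_testFunction_drift hb hbB hg hψ hη hu hu0 hui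
  have hcu := integrable_inner_gradient_testFunction (μ := μ) hg.continuous hψ.contDiff
    hψ.hasCompactSupport hu (hc.lipschitz.continuous.clm_apply (continuous_gradient_of_contDiff hu))
  have hub := integrable_inner_gradient_testFunction (μ := μ) hg.continuous hψ.contDiff
    hψ.hasCompactSupport hu (hu.continuous.fun_smul hb.continuous)
  simp only [flux, inner_add_right, real_inner_smul_right _ _ (1 / 2 : ℝ)]
  rw [integral_add (hcu.const_mul _) hub, integral_const_mul]
  linarith

end FluxEnergy

section FluxCommutator

variable {E : Type*} [NormedAddCommGroup E] [InnerProductSpace ℝ E] [FiniteDimensional ℝ E]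
  [MeasurableSpace E] [BorelSpace E] {μ : Measure E} [μ.IsAddHaarMeasure] {φ : ContDiffBump (0 : E)}
  {M θ : ℝ} {K L η : ℝ≥0} {g : ℝ → ℝ} {ψ m J : E → ℝ} {c : E → E →L[ℝ] E} {b Dm : E → E}

theorem IsTruncatedInv.mul_mollify_norm_le (hg : IsTruncatedInv M g) (hm : LocallyIntegrable m μ)
    (hDm : LocallyIntegrable Dm μ) (hm0 : ∀ x, 0 ≤ m x) (hJ : LocallyIntegrable J μ)
    (hJ0 : ∀ x, 0 ≤ J x) (hle : ∀ᵐ x ∂μ, ‖Dm x‖ ^ 2 ≤ J x * m x) (x : E) :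
    (g (mollify φ μ m x) * ‖mollify φ μ Dm x‖ + 1) *
        (K * mollify φ μ (fun y ↦ ‖Dm y‖) x + L * mollify φ μ m x) ≤
      (K + L) * mollify φ μ (J + (fun y ↦ ‖Dm y‖) + m) x := by
  have hN := locallyIntegrable_norm hDm
  rw [mollify_add (hJ.add hN) hm, mollify_add hJ hN]
  have hρ := mollify_nonneg (φ := φ) (μ := μ) hm0 x
  have hγ := hg.nonneg _ hρ
  have hργ := hg.mul_le_one _ hρ
  have hnorm : ‖mollify φ μ Dm x‖ ≤ mollify φ μ (fun y ↦ ‖Dm y‖) x := norm_mollify_le x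
  have hsq := mul_sq_mollify_le hN hJ hm hJ0 hm0 hle hγ ((mul_comm _ _).trans_le hργ)
  have hJφ := mollify_nonneg (φ := φ) (μ := μ) hJ0 x
  set N := mollify φ μ (fun y ↦ ‖Dm y‖) x
  set ρ := mollify φ μ m x
  have hN0 : 0 ≤ N := (norm_nonneg _).trans hnorm
  calc _ ≤ (g ρ * N + 1) * (K * N + L * ρ) := by gcongr
    _ = K * (g ρ * N ^ 2) + L * (N * (ρ * g ρ)) + K * N + L * ρ := by ring
    _ ≤ K * mollify φ μ J x + L * (N * 1) + K * N + L * ρ := by gcongr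
    _ ≤ _ := by nlinarith [mul_nonneg L.2 hJφ, mul_nonneg K.2 hρ]

end FluxCommutator

section MollifiedEnergy

variable {M θ B F : ℝ} {K L η : ℝ≥0} {g : ℝ → ℝ} {ψ m J : EuclideanSpace ℝ (Fin l) → ℝ}
  {c : EuclideanSpace ℝ (Fin l) → (EuclideanSpace ℝ (Fin l) →L[ℝ] EuclideanSpace ℝ (Fin l))}
  {b Dm : EuclideanSpace ℝ (Fin l) → EuclideanSpace ℝ (Fin l)}
  {φ : ContDiffBump (0 : EuclideanSpace ℝ (Fin l))}

theorem inner_gradient_testFunction_commutator_le (hc : IsEllipticField θ K c)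
    (hb : LipschitzWith L b) (hw : HasWeakGrad m Dm) (hm0 : ∀ x, 0 ≤ m x)
    (hJ : LocallyIntegrable J) (hJ0 : ∀ x, 0 ≤ J x) (hle : ∀ᵐ x, ‖Dm x‖ ^ 2 ≤ J x * m x)
    (hg : IsTruncatedInv M g) (hψ : IsCutoff η ψ) (hη : (M + 1) * η ≤ 1)
    (x : EuclideanSpace ℝ (Fin l)) :
    ⟪gradient (testFunction g ψ (mollify φ volume m)) x,
        flux c b (mollify φ volume m) (mollify φ volume Dm) x -
          mollify φ volume (flux c b m Dm) x⟫ ≤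
      φ.rOut * ((K + L) * mollify φ volume (J + (fun y ↦ ‖Dm y‖) + m) x) := by
  have hm := hw.1
  have hDm := hw.2.1
  have hgrad := norm_gradient_testFunction_le hg hψ hη
    ((contDiff_mollify (φ := φ) hm).of_le (mod_cast le_top)) (mollify_nonneg hm0) x
  have hcomm := norm_mollify_flux_sub_le (φ := φ) hc hb hm hDm x
  simp only [Real.norm_of_nonneg (hm0 _)] at hcomm
  rw [hw.gradient_mollify φ] at hgrad
  rw [norm_sub_rev] at hcomm
  calc _ ≤ _ := real_inner_le_norm _ _
    _ ≤ _ := mul_le_mul hgrad hcomm (norm_nonneg _) ((norm_nonneg _).trans hgrad)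
    _ ≤ _ := by
      rw [mul_left_comm]
      exact mul_le_mul_of_nonneg_left (hg.mul_mollify_norm_le hm hDm hm0 hJ hJ0 hle x)
        φ.rOut_pos.le

theorem integral_inner_gradient_testFunction_flux_sub_le (hc : IsEllipticField θ K c)
    (hb : LipschitzWith L b) (hw : HasWeakGrad m Dm) (hm0 : ∀ x, 0 ≤ m x)
    (hJ : LocallyIntegrable J) (hJ0 : ∀ x, 0 ≤ J x) (hle : ∀ᵐ x, ‖Dm x‖ ^ 2 ≤ J x * m x)
    (hφ : φ.rOut ≤ 1) (hg : IsTruncatedInv M g) (hψ : IsCutoff η ψ) (hη : (M + 1) * η ≤ 1) :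
    (∫ x, ⟪gradient (testFunction g ψ (mollify φ volume m)) x,
        flux c b (mollify φ volume m) (mollify φ volume Dm) x⟫) -
      φ.rOut * ((K + L) * ∫ x in Metric.cthickening 1 (tsupport ψ), (J x + ‖Dm x‖ + m x)) ≤
      ∫ x, ⟪gradient (testFunction g ψ (mollify φ volume m)) x,
        mollify φ volume (flux c b m Dm) x⟫ := by
  set S := tsupport ψ
  have hS : IsCompact S := hψ.hasCompactSupport
  set T : EuclideanSpace ℝ (Fin l) → ℝ := J + (fun y ↦ ‖Dm y‖) + m
  have hT : LocallyIntegrable T := (hJ.add (locallyIntegrable_norm hw.2.1)).add hw.1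
  have hT0 : ∀ x, 0 ≤ T x := fun x ↦ add_nonneg (add_nonneg (hJ0 x) (norm_nonneg _)) (hm0 x)
  set k := testFunction g ψ (mollify φ volume m)
  have hpair := fun {W} ↦ integrable_inner_gradient_testFunction (μ := volume) (W := W)
    hg.continuous hψ.contDiff hψ.hasCompactSupport
    ((contDiff_mollify (φ := φ) (μ := volume) hw.1).of_le (mod_cast le_top))
  have hTφ : Continuous (mollify φ volume T) := continuous_mollify hT
  have hflux : Continuous (flux c b (mollify φ volume m) (mollify φ volume Dm)) :=
    continuous_flux hc.lipschitz.continuous hb.continuous (continuous_mollify hw.1)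
      (continuous_mollify hw.2.1)
  have hmoll : Continuous (mollify φ volume (flux c b m Dm)) :=
    continuous_mollify (locallyIntegrable_flux hc hb.continuous hw.1 hw.2.1)
  have hsupp : ∀ x, x ∉ S → ⟪gradient k x, flux c b (mollify φ volume m) (mollify φ volume Dm) x -
      mollify φ volume (flux c b m Dm) x⟫ = 0 := fun x hx ↦ by
    rw [gradient_eq_zero_of_notMem_tsupport fun hx' ↦ hx (tsupport_testFunction_subset hx'),
      inner_zero_left]
  rw [sub_le_comm, ← integral_sub (hpair hflux) (hpair hmoll)]
  simp only [← inner_sub_right]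
  rw [← setIntegral_eq_integral_of_forall_compl_eq_zero hsupp]
  calc _ ≤ ∫ x in S, φ.rOut * ((K + L) * mollify φ volume T x) :=
        setIntegral_mono (hpair (hflux.sub hmoll)).integrableOn
          (((hTφ.const_mul _).const_mul _).continuousOn.integrableOn_compact
            hS) (inner_gradient_testFunction_commutator_le hc hb hw hm0 hJ hJ0 hle hg hψ hη)
    _ = φ.rOut * ((K + L) * ∫ x in S, mollify φ volume T x) := by
        rw [integral_const_mul, integral_const_mul]
    _ ≤ _ := by
        have hthick := setIntegral_mollify_le (φ := φ) hT0 hS.measurableSet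
          Metric.isClosed_cthickening.measurableSet
          (Metric.thickening_subset_cthickening_of_le hφ S)
          (hT.integrableOn_isCompact hS.cthickening)
        have hr := φ.rOut_pos.le
        gcongr
        exact hthick

/-- The factor of the total mass in the energy inequality, in dimension `d`. -/
noncomputable def energyRate (d : ℕ) (θ K L B : ℝ) : ℝ :=
  θ ^ 2 / 4 * (d * ((K + θ⁻¹) / 2 + L) + B) + θ ^ 3 / 16

theorem IsVariationalBound.truncatedFisher_mollify_le
    (hF : IsVariationalBound volume c (flux c b m Dm) m F) (hc : IsEllipticField θ K c)
    (hb : LipschitzWith L b) (hbB : ∀ x, ‖b x‖ ≤ B * (1 + ‖x‖)) (hw : HasWeakGrad m Dm)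
    (hm0 : ∀ x, 0 ≤ m x) (hmi : Integrable m) (hJ : LocallyIntegrable J) (hJ0 : ∀ x, 0 ≤ J x)
    (hle : ∀ᵐ x, ‖Dm x‖ ^ 2 ≤ J x * m x) (hφ : φ.rOut ≤ 1) (hg : IsTruncatedInv M g)
    (hψ : IsCutoff η ψ) (hη : (M + 1) * η ≤ 1) :
    θ ^ 3 / 16 * truncatedFisher volume g ψ (mollify φ volume m) (mollify φ volume Dm) ≤
      F + energyRate l θ K L B * (∫ x, m x) + θ ^ 2 / 4 * (φ.rOut *
        ((K + L) * ∫ x in Metric.cthickening 1 (tsupport ψ), (J x + ‖Dm x‖ + m x))) := by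
  have hθ := hc.pos
  have hu : ContDiff ℝ 1 (mollify φ volume m) := (contDiff_mollify hw.1).of_le (mod_cast le_top)
  have hu0 := mollify_nonneg (φ := φ) (μ := volume) hm0
  have hui : Integrable (mollify φ volume m) volume := integrable_mollify hmi
  have htest := hF.mollify_mul_sub_le hc (locallyIntegrable_flux hc hb.continuous hw.1 hw.2.1)
    hw.1 hm0 (contDiff_testFunction hg.continuous hψ.contDiff hu)
    (hasCompactSupport_testFunction hψ.hasCompactSupport) φ (θ ^ 2 / 4)
  have hcomm := integral_inner_gradient_testFunction_flux_sub_le hc hb hw hm0 hJ hJ0 hle hφ hg hψ hη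
  have hlower := le_integral_inner_gradient_testFunction_flux hc hb hbB hg hψ hη hu hu0 hui
  have hsq := integral_sq_norm_gradient_testFunction_mul_le hg hψ hη hu hu0 hui
  rw [hw.gradient_mollify φ, integral_mollify hmi, finrank_euclideanSpace_fin] at hlower
  rw [hw.gradient_mollify φ, integral_mollify hmi] at hsq
  have hhalf : (θ ^ 2 / 4) ^ 2 / 2 * θ⁻¹ = θ ^ 3 / 32 := by field_simp; norm_num
  rw [← mul_assoc, hhalf] at htest
  rw [energyRate]
  linarith [mul_le_mul_of_nonneg_left (sub_le_sub_right hlower _ |>.trans hcomm)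
    (by positivity : 0 ≤ θ ^ 2 / 4), mul_le_mul_of_nonneg_left hsq (by positivity : 0 ≤ θ ^ 3 / 32)]

end MollifiedEnergy

section TruncatedInv

/-- A truncation of `r ↦ r⁻¹` that is continuous on the whole line and integrable. -/
noncomputable def truncatedInv (δ r : ℝ) : ℝ := (δ + |r| + δ * r ^ 2)⁻¹

theorem primitive_inv_one_add_sq (r : ℝ) : primitive (fun s ↦ (1 + s ^ 2)⁻¹) r = Real.arctan r := by
  rw [primitive, integral_inv_one_add_sq, Real.arctan_zero, sub_zero]

theorem isTruncatedInv_truncatedInv {δ : ℝ} (hδ : 0 < δ) :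
    IsTruncatedInv (2 / δ) (truncatedInv δ) := by
  have hcont : Continuous (truncatedInv δ) := by
    refine Continuous.inv₀ (by fun_prop) fun r ↦ ?_
    positivity
  have hmajor : Continuous fun s : ℝ ↦ δ⁻¹ * (1 + s ^ 2)⁻¹ :=
    continuous_const.mul (Continuous.inv₀ (by fun_prop) fun s ↦ by positivity)
  refine ⟨hcont, fun r _ ↦ inv_nonneg.2 (by positivity), fun r hr ↦ ?_, fun r hr ↦ ?_⟩
  · rw [truncatedInv, ← div_eq_mul_inv, abs_of_nonneg hr, div_le_one (by positivity)]
    linarith [mul_nonneg hδ.le (sq_nonneg r)]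
  · have hle : ∀ s : ℝ, 0 ≤ s → truncatedInv δ s ≤ δ⁻¹ * (1 + s ^ 2)⁻¹ := fun s _ ↦ by
      rw [truncatedInv, ← mul_inv]
      gcongr
      linarith [abs_nonneg s]
    calc primitive (truncatedInv δ) r ≤ primitive (fun s ↦ δ⁻¹ * (1 + s ^ 2)⁻¹) r :=
          primitive_mono hcont hmajor hle hr
      _ = δ⁻¹ * Real.arctan r := by
          rw [← primitive_inv_one_add_sq, primitive, intervalIntegral.integral_const_mul, primitive]
      _ ≤ δ⁻¹ * 2 := by
          gcongr
          linarith [Real.arctan_lt_pi_div_two r, Real.pi_le_four]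
      _ = 2 / δ := inv_mul_eq_div _ _

theorem tendsto_truncatedInv {r : ℝ} (hr : 0 < r) :
    Tendsto (fun δ ↦ truncatedInv δ r) (𝓝 0) (𝓝 r⁻¹) := by
  have hcont : ContinuousAt (fun δ ↦ truncatedInv δ r) 0 :=
    ContinuousAt.inv₀ (by fun_prop) (by simpa using hr.ne')
  simpa [ContinuousAt, truncatedInv, abs_of_pos hr] using hcont

end TruncatedInv

section LogarithmicCutoff

theorem log_one_add_sq_nonneg (r : ℝ) : 0 ≤ Real.log (1 + r ^ 2) :=
  Real.log_nonneg (le_add_of_nonneg_right (sq_nonneg r))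

variable {E : Type*} [NormedAddCommGroup E] {χ : ContDiffBump (0 : ℝ)} {κ A : ℝ} {A' : ℝ≥0}

/-- The radial function `x ↦ χ (κ log (1 + ‖x‖²))`, where `χ` is a bump equal to `1` near `0`. Its
slowly varying profile makes `(1 + ‖x‖) ‖∇ψ x‖` of order `κ`. -/
noncomputable def logCutoff (χ : ContDiffBump (0 : ℝ)) (κ : ℝ) (x : E) : ℝ :=
  χ (κ * Real.log (1 + ‖x‖ ^ 2))

theorem hasCompactSupport_logCutoff [ProperSpace E] (hκ : 0 < κ) :
    HasCompactSupport (logCutoff χ κ : E → ℝ) := by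
  refine HasCompactSupport.intro (isCompact_closedBall 0 (Real.exp (χ.rOut / κ))) fun x hx ↦ ?_
  have hlarge : Real.exp (χ.rOut / κ) < ‖x‖ := by simpa using hx
  have hone : 1 ≤ Real.exp (χ.rOut / κ) := Real.one_le_exp (div_nonneg χ.rOut_pos.le hκ.le)
  have hlog : χ.rOut / κ ≤ Real.log (1 + ‖x‖ ^ 2) := by
    rw [Real.le_log_iff_exp_le (by positivity)]
    nlinarith
  rw [div_le_iff₀' hκ] at hlog
  exact χ.zero_of_le_dist (by rw [dist_zero_right]; exact hlog.trans (le_abs_self _))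

theorem logCutoff_eq_one {R : ℝ} (hκ : 0 ≤ κ) (hR : κ * Real.log (1 + R ^ 2) ≤ χ.rIn) {x : E}
    (hx : ‖x‖ ≤ R) : logCutoff χ κ x = 1 := by
  refine χ.one_of_mem_closedBall ?_
  rw [mem_closedBall_zero_iff, Real.norm_of_nonneg (mul_nonneg hκ (log_one_add_sq_nonneg _))]
  exact le_trans (by gcongr) hR

variable [InnerProductSpace ℝ E]

theorem norm_two_div_smul_mul_le (x : E) : ‖(2 / (1 + ‖x‖ ^ 2)) • x‖ * (1 + ‖x‖) ≤ 4 := by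
  rw [norm_smul, Real.norm_of_nonneg (by positivity), div_mul_eq_mul_div, div_mul_eq_mul_div,
    div_le_iff₀ (by positivity)]
  nlinarith [sq_nonneg (‖x‖ - 1)]

theorem norm_two_div_smul_le (x : E) : ‖(2 / (1 + ‖x‖ ^ 2)) • x‖ ≤ 1 := by
  rw [norm_smul, Real.norm_of_nonneg (by positivity), div_mul_eq_mul_div,
    div_le_iff₀ (by positivity)]
  nlinarith [sq_nonneg (‖x‖ - 1)]

theorem norm_two_div_smul_sub_le (x y : E) :
    ‖(2 / (1 + ‖x‖ ^ 2)) • x - (2 / (1 + ‖y‖ ^ 2)) • y‖ ≤ 4 * ‖x - y‖ := by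
  have hy : 0 < 1 + ‖y‖ ^ 2 := by positivity
  have hsplit : (2 / (1 + ‖x‖ ^ 2)) • x - (2 / (1 + ‖y‖ ^ 2)) • y =
      (2 / ((1 + ‖x‖ ^ 2) * (1 + ‖y‖ ^ 2))) •
        ((1 + ‖y‖ ^ 2) • (x - y) + ((‖y‖ - ‖x‖) * (‖y‖ + ‖x‖)) • y) := by
    match_scalars <;> field_simp
    ring
  have hnorm : |‖y‖ - ‖x‖| ≤ ‖x - y‖ := norm_sub_rev x y ▸ abs_norm_sub_norm_le y x
  rw [hsplit, norm_smul, Real.norm_of_nonneg (by positivity), div_mul_eq_mul_div,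
    div_le_iff₀ (by positivity)]
  calc _ ≤ 2 * ((1 + ‖y‖ ^ 2) * ‖x - y‖ + ‖x - y‖ * (‖y‖ + ‖x‖) * ‖y‖) := by
        gcongr
        refine (norm_add_le _ _).trans ?_
        rw [norm_smul, norm_smul, Real.norm_of_nonneg hy.le, norm_mul, Real.norm_eq_abs,
          Real.norm_of_nonneg (by positivity)]
        gcongr
    _ = ‖x - y‖ * (2 * (1 + ‖y‖ ^ 2 + (‖y‖ + ‖x‖) * ‖y‖)) := by ring
    _ ≤ ‖x - y‖ * (4 * ((1 + ‖x‖ ^ 2) * (1 + ‖y‖ ^ 2))) := by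
        refine mul_le_mul_of_nonneg_left ?_ (norm_nonneg _)
        nlinarith [sq_nonneg (‖x‖ * ‖y‖ - 1), sq_nonneg ‖x‖, sq_nonneg (‖x‖ * ‖y‖)]
    _ = _ := by ring

theorem contDiff_logCutoff : ContDiff ℝ 1 (logCutoff χ κ : E → ℝ) := by
  refine χ.contDiff.comp (contDiff_const.mul (ContDiff.log
    (contDiff_const.add (contDiff_norm_sq ℝ)) fun x ↦ ?_))
  positivity

variable [CompleteSpace E]

theorem hasGradientAt_log_one_add_sq (x : E) :
    HasGradientAt (fun x : E ↦ Real.log (1 + ‖x‖ ^ 2)) ((2 / (1 + ‖x‖ ^ 2)) • x) x := by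
  have hsq : HasGradientAt (fun x : E ↦ 1 + ‖x‖ ^ 2) ((2 : ℝ) • x) x := by
    rw [hasGradientAt_iff_hasFDerivAt]
    refine ((hasStrictFDerivAt_norm_sq x).hasFDerivAt.const_add 1).congr_fderiv ?_
    ext y
    simp
  have hlog := hasGradientAt_comp_of_hasDerivAt (f := fun x : E ↦ 1 + ‖x‖ ^ 2)
    (Real.hasDerivAt_log (by positivity : 1 + ‖x‖ ^ 2 ≠ 0)) hsq
  rwa [smul_smul, inv_mul_eq_div] at hlog

theorem abs_log_one_add_sq_sub_le (x y : E) :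
    |Real.log (1 + ‖x‖ ^ 2) - Real.log (1 + ‖y‖ ^ 2)| ≤ ‖x - y‖ := by
  have hmean := Convex.norm_image_sub_le_of_norm_hasFDerivWithin_le (C := 1)
    (fun z _ ↦ (hasGradientAt_log_one_add_sq z).hasFDerivAt.hasFDerivWithinAt)
    (fun z _ ↦ by rw [LinearIsometryEquiv.norm_map]; exact norm_two_div_smul_le z)
    convex_univ (mem_univ y) (mem_univ x)
  rwa [one_mul] at hmean

theorem gradient_logCutoff (x : E) : gradient (logCutoff χ κ) x =
    (κ * deriv χ (κ * Real.log (1 + ‖x‖ ^ 2))) • (2 / (1 + ‖x‖ ^ 2)) • x := by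
  have hχ := (χ.contDiff.differentiable one_ne_zero (κ * Real.log (1 + ‖x‖ ^ 2))).hasDerivAt
  have hcomp := hχ.comp _ ((hasDerivAt_id (Real.log (1 + ‖x‖ ^ 2))).const_mul κ)
  rw [mul_one, mul_comm] at hcomp
  exact (hasGradientAt_comp_of_hasDerivAt (f := fun x : E ↦ Real.log (1 + ‖x‖ ^ 2)) hcomp
    (hasGradientAt_log_one_add_sq x)).gradient

theorem norm_gradient_logCutoff_mul_le (hκ : 0 ≤ κ) (hA : ∀ r, ‖deriv χ r‖ ≤ A) (x : E) :
    ‖gradient (logCutoff χ κ) x‖ * (1 + ‖x‖) ≤ κ * (4 * A) := by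
  rw [gradient_logCutoff, norm_smul, norm_mul, Real.norm_of_nonneg hκ, mul_assoc, mul_comm 4 A,
    ← mul_assoc κ A 4]
  have hA0 : 0 ≤ A := (norm_nonneg _).trans (hA 0)
  gcongr
  · exact hA _
  · exact norm_two_div_smul_mul_le x

theorem norm_gradient_logCutoff_sub_le (hκ : 0 ≤ κ) (hκ1 : κ ≤ 1) (hA : ∀ r, ‖deriv χ r‖ ≤ A)
    (hA' : LipschitzWith A' (deriv χ)) (x y : E) :
    ‖gradient (logCutoff χ κ) x - gradient (logCutoff χ κ) y‖ ≤ κ * (A' + 4 * A) * ‖x - y‖ := by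
  have hA0 : 0 ≤ A := (norm_nonneg _).trans (hA 0)
  set p := deriv χ (κ * Real.log (1 + ‖x‖ ^ 2))
  set q := deriv χ (κ * Real.log (1 + ‖y‖ ^ 2))
  have hpq : ‖p - q‖ ≤ A' * ‖x - y‖ := by
    refine (hA'.norm_sub_le _ _).trans ?_
    rw [Real.norm_eq_abs, ← mul_sub, abs_mul, abs_of_nonneg hκ]
    gcongr
    exact (mul_le_of_le_one_left (abs_nonneg _) hκ1).trans (abs_log_one_add_sq_sub_le x y)
  have hsplit : gradient (logCutoff χ κ) x - gradient (logCutoff χ κ) y =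
      κ • ((p - q) • (2 / (1 + ‖x‖ ^ 2)) • x +
        q • ((2 / (1 + ‖x‖ ^ 2)) • x - (2 / (1 + ‖y‖ ^ 2)) • y)) := by
    rw [gradient_logCutoff, gradient_logCutoff]
    module
  rw [hsplit, norm_smul, Real.norm_of_nonneg hκ]
  calc _ ≤ κ * (A' * ‖x - y‖ * 1 + A * (4 * ‖x - y‖)) := by
        gcongr
        refine (norm_add_le _ _).trans ?_
        rw [norm_smul, norm_smul q]
        gcongr
        · exact norm_two_div_smul_le x
        · exact hA _
        · exact norm_two_div_smul_sub_le x y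
    _ = κ * (A' + 4 * A) * ‖x - y‖ := by ring

theorem isCutoff_logCutoff [FiniteDimensional ℝ E] {η : ℝ≥0} (hκ : 0 < κ) (hκ1 : κ ≤ 1)
    (hA : ∀ r, ‖deriv χ r‖ ≤ A) (hA' : LipschitzWith A' (deriv χ)) (hη : κ * (A' + 4 * A) ≤ η) :
    IsCutoff η (logCutoff χ κ : E → ℝ) where
  contDiff := contDiff_logCutoff
  hasCompactSupport := hasCompactSupport_logCutoff hκ
  nonneg _ := χ.nonneg
  le_one _ := χ.le_one
  norm_gradient_mul_le x := by
    refine (norm_gradient_logCutoff_mul_le hκ.le hA x).trans (le_trans ?_ hη)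
    gcongr
    exact le_add_of_nonneg_left A'.coe_nonneg
  lipschitz := LipschitzWith.of_dist_le_mul fun x y ↦ by
    rw [dist_eq_norm, dist_eq_norm]
    exact (norm_gradient_logCutoff_sub_le hκ.le hκ1 hA hA' x y).trans (by gcongr)

theorem exists_isCutoff [FiniteDimensional ℝ E] {η : ℝ≥0} (hη : 0 < η) (R : ℝ) :
    ∃ ψ : E → ℝ, IsCutoff η ψ ∧ ∀ x, ‖x‖ ≤ R → ψ x = 1 := by
  let χ : ContDiffBump (0 : ℝ) := ⟨1, 2, one_pos, one_lt_two⟩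
  have hχ' : ContDiff ℝ 1 (deriv χ) := (contDiff_succ_iff_deriv (n := 1).1 χ.contDiff).2.2
  have hsupp : HasCompactSupport (deriv χ) := χ.hasCompactSupport.deriv
  obtain ⟨A, hA⟩ := hχ'.continuous.bounded_above_of_compact_support hsupp
  obtain ⟨A', hA'⟩ := ContDiff.lipschitzWith_of_hasCompactSupport hsupp hχ' one_ne_zero
  have hlim : ∀ C : ℝ, Tendsto (fun κ : ℝ ↦ κ * C) (𝓝[>] 0) (𝓝 0) := fun C ↦
    tendsto_nhdsWithin_of_tendsto_nhds (Continuous.tendsto' (by fun_prop) _ _ (zero_mul C))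
  obtain ⟨κ, ⟨hκ1, hκη, hκR⟩, hκ⟩ := (((hlim 1).eventually_le_const one_pos).and
    (((hlim (A' + 4 * A)).eventually_le_const (NNReal.coe_pos.2 hη)).and
      ((hlim (Real.log (1 + R ^ 2))).eventually_le_const one_pos))).and
        self_mem_nhdsWithin |>.exists
  exact ⟨logCutoff χ κ, isCutoff_logCutoff hκ (by simpa using hκ1) hA hA' hκη,
    fun x hx ↦ logCutoff_eq_one (le_of_lt hκ) hκR hx⟩

end LogarithmicCutoff

section LowerSemicontinuity

open scoped ENNReal

variable {X : Type*} [MeasurableSpace X] {μ : Measure X}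

theorem lintegral_le_of_ae_tendsto {f : ℕ → X → ℝ≥0∞} {g : X → ℝ≥0∞} {C : ℕ → ℝ≥0∞} {D : ℝ≥0∞}
    (hf : ∀ n, AEMeasurable (f n) μ) (hfg : ∀ᵐ x ∂μ, Tendsto (f · x) atTop (𝓝 (g x)))
    (hfC : ∀ n, ∫⁻ x, f n x ∂μ ≤ C n) (hC : Tendsto C atTop (𝓝 D)) : ∫⁻ x, g x ∂μ ≤ D :=
  calc ∫⁻ x, g x ∂μ = ∫⁻ x, liminf (f · x) atTop ∂μ :=
        lintegral_congr_ae (hfg.mono fun _ hx ↦ hx.liminf_eq.symm)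
    _ ≤ liminf (fun n ↦ ∫⁻ x, f n x ∂μ) atTop := lintegral_liminf_le' hf
    _ ≤ liminf C atTop := liminf_le_liminf (Eventually.of_forall hfC)
    _ = D := hC.liminf_eq

end LowerSemicontinuity

section FisherInformation

open scoped ENNReal

/-- The Fisher information of a density `m` with gradient `Dm`. As `0 / 0 = 0` in `ℝ`, the integrand
vanishes on `{m = 0}`. -/
noncomputable def fisherInformation {X E : Type*} [MeasurableSpace X] [NormedAddCommGroup E]
    (μ : Measure X) (m : X → ℝ) (Dm : X → E) : ℝ≥0∞ :=
  ∫⁻ x, ENNReal.ofReal (‖Dm x‖ ^ 2 / m x) ∂μ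

variable {M θ B F : ℝ} {K L η : ℝ≥0} {g : ℝ → ℝ} {ψ m J : EuclideanSpace ℝ (Fin l) → ℝ}
  {c : EuclideanSpace ℝ (Fin l) → (EuclideanSpace ℝ (Fin l) →L[ℝ] EuclideanSpace ℝ (Fin l))}
  {b Dm : EuclideanSpace ℝ (Fin l) → EuclideanSpace ℝ (Fin l)}

theorem IsVariationalBound.lintegral_truncatedFisher_le
    (hF : IsVariationalBound volume c (flux c b m Dm) m F) (hc : IsEllipticField θ K c)
    (hb : LipschitzWith L b) (hbB : ∀ x, ‖b x‖ ≤ B * (1 + ‖x‖)) (hw : HasWeakGrad m Dm)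
    (hm0 : ∀ x, 0 ≤ m x) (hmi : Integrable m) (hJ : LocallyIntegrable J) (hJ0 : ∀ x, 0 ≤ J x)
    (hle : ∀ᵐ x, ‖Dm x‖ ^ 2 ≤ J x * m x) (hg : IsTruncatedInv M g) (hψ : IsCutoff η ψ)
    (hη : (M + 1) * η ≤ 1) :
    ∫⁻ x, ENNReal.ofReal (ψ x * g (m x) * ‖Dm x‖ ^ 2) ≤
      ENNReal.ofReal (16 / θ ^ 3 * (F + energyRate l θ K L B * ∫ x, m x)) := by
  have hθ := hc.pos
  set φ := shrinkingBump (EuclideanSpace ℝ (Fin l))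
  set X := (K + L) * ∫ x in Metric.cthickening 1 (tsupport ψ), (J x + ‖Dm x‖ + m x)
  have hint : ∀ k, Integrable fun x ↦
      ψ x * g (mollify (φ k) volume m x) * ‖mollify (φ k) volume Dm x‖ ^ 2 := fun k ↦
    integrable_truncatedFisher hg.continuous hψ.contDiff.continuous hψ.hasCompactSupport
      (continuous_mollify hw.1) (continuous_mollify hw.2.1)
  have hnonneg : ∀ k x,
      0 ≤ ψ x * g (mollify (φ k) volume m x) * ‖mollify (φ k) volume Dm x‖ ^ 2 := fun k x ↦
    mul_nonneg (mul_nonneg (hψ.nonneg x) (hg.nonneg _ (mollify_nonneg hm0 x))) (sq_nonneg _)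
  have hlimit : Tendsto (fun k ↦ 16 / θ ^ 3 * (F + energyRate l θ K L B * (∫ x, m x) +
      θ ^ 2 / 4 * ((φ k).rOut * X))) atTop
      (𝓝 (16 / θ ^ 3 * (F + energyRate l θ K L B * ∫ x, m x))) := by
    simpa using ((((tendsto_shrinkingBump_rOut (EuclideanSpace ℝ (Fin l))).mul_const X).const_mul
      (θ ^ 2 / 4)).const_add _).const_mul (16 / θ ^ 3)
  refine lintegral_le_of_ae_tendsto (fun k ↦ (hint k).aemeasurable.ennreal_ofReal) ?_ (fun k ↦ ?_)
    (ENNReal.tendsto_ofReal hlimit)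
  · filter_upwards [ae_tendsto_mollify_shrinkingBump hw.1,
      ae_tendsto_mollify_shrinkingBump hw.2.1] with x hmx hDmx
    exact ENNReal.tendsto_ofReal ((((hg.continuous.tendsto _).comp hmx).const_mul (ψ x)).mul
      (hDmx.norm.pow 2))
  · rw [← ofReal_integral_eq_lintegral_ofReal (hint k) (Eventually.of_forall (hnonneg k))]
    refine ENNReal.ofReal_le_ofReal ?_
    have henergy := hF.truncatedFisher_mollify_le hc hb hbB hw hm0 hmi hJ hJ0 hle
      (shrinkingBump_rOut_le_one _ k) hg hψ hη
    rw [div_mul_eq_mul_div, le_div_iff₀' (by positivity)]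
    rw [truncatedFisher] at henergy
    linarith

theorem HasWeakGrad.sq_norm_le_div_mul (hw : HasWeakGrad m Dm) :
    ∀ᵐ x, ‖Dm x‖ ^ 2 ≤ ‖Dm x‖ ^ 2 / m x * m x := by
  filter_upwards [hw.ae_eq_zero_of_eq_zero] with x hx
  rcases eq_or_ne (m x) 0 with h | h
  · simp [hx h]
  · rw [div_mul_cancel₀ _ h]

theorem exists_isCutoff_seq {E : Type*} [NormedAddCommGroup E] [InnerProductSpace ℝ E]
    [FiniteDimensional ℝ E] {M : ℕ → ℝ} (hM : ∀ n, 0 ≤ M n) :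
    ∃ (η : ℕ → ℝ≥0) (ψ : ℕ → E → ℝ), (∀ n, IsCutoff (η n) (ψ n)) ∧ (∀ n, (M n + 1) * η n ≤ 1) ∧
      ∀ x, ∀ᶠ n in atTop, ψ n x = 1 := by
  have hpos : ∀ n, 0 < M n + 1 := fun n ↦ by linarith [hM n]
  choose ψ hψ hψ1 using fun n : ℕ ↦ exists_isCutoff (E := E)
    (Real.toNNReal_pos.2 (inv_pos.2 (hpos n))) n
  refine ⟨_, ψ, hψ, fun n ↦ ?_, fun x ↦ ?_⟩
  · rw [Real.coe_toNNReal _ (inv_nonneg.2 (hpos n).le), mul_inv_cancel₀ (hpos n).ne']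
  · filter_upwards [eventually_ge_atTop ⌈‖x‖⌉₊] with n hn
    exact hψ1 n x (Nat.ceil_le.1 hn)

theorem IsVariationalBound.fisherInformation_le
    (hF : IsVariationalBound volume c (flux c b m Dm) m F) (hc : IsEllipticField θ K c)
    (hb : LipschitzWith L b) (hbB : ∀ x, ‖b x‖ ≤ B * (1 + ‖x‖)) (hw : HasWeakGrad m Dm)
    (hm0 : ∀ x, 0 ≤ m x) (hmi : Integrable m)
    (hJ : LocallyIntegrable fun x ↦ ‖Dm x‖ ^ 2 / m x) :
    fisherInformation volume m Dm ≤
      ENNReal.ofReal (16 / θ ^ 3 * (F + energyRate l θ K L B * ∫ x, m x)) := by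
  set δ : ℕ → ℝ := fun n ↦ 1 / ((n : ℝ) + 1)
  have hδ : Tendsto δ atTop (𝓝 0) := tendsto_one_div_add_atTop_nhds_zero_nat
  have hg : ∀ n, IsTruncatedInv (2 / δ n) (truncatedInv (δ n)) := fun n ↦
    isTruncatedInv_truncatedInv Nat.one_div_pos_of_nat
  obtain ⟨η, ψ, hψ, hη, hψ1⟩ := exists_isCutoff_seq (E := EuclideanSpace ℝ (Fin l))
    fun n ↦ (hg n).bound_nonneg
  refine lintegral_le_of_ae_tendsto
    (f := fun n x ↦ ENNReal.ofReal (ψ n x * truncatedInv (δ n) (m x) * ‖Dm x‖ ^ 2)) (fun n ↦ ?_) ?_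
    (fun n ↦ hF.lintegral_truncatedFisher_le hc hb hbB hw hm0 hmi hJ
      (fun x ↦ div_nonneg (sq_nonneg _) (hm0 x)) hw.sq_norm_le_div_mul (hg n) (hψ n) (hη n))
    tendsto_const_nhds
  · exact (((hψ n).contDiff.continuous.aestronglyMeasurable.mul
      ((hg n).continuous.comp_aestronglyMeasurable hw.1.aestronglyMeasurable)).mul
        (hw.2.1.aestronglyMeasurable.norm.pow 2)).aemeasurable.ennreal_ofReal
  · filter_upwards [hw.ae_eq_zero_of_eq_zero] with x hx
    refine ENNReal.tendsto_ofReal ?_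
    rcases (hm0 x).eq_or_lt with hmx | hmx
    · simp [hx hmx.symm]
    · have hψx : Tendsto (ψ · x) atTop (𝓝 1) :=
        tendsto_const_nhds.congr' ((hψ1 x).mono fun _ h ↦ h.symm)
      simpa [div_eq_inv_mul] using
        (hψx.mul ((tendsto_truncatedInv hmx).comp hδ)).mul_const (‖Dm x‖ ^ 2)

end FisherInformation

section RegularCoefficients

open scoped ENNReal

/-- The supremum over `h ∈ C¹₀` of `∫ Dhᵀ(½ div(c m) - a m) - ½ Dhᵀ c Dh m`, for a density `m` with
weak gradient `Dm`. Negative values are cut off by `ENNReal.ofReal`, which is harmless because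
`h = 0` is admissible. -/
noncomputable def variationalFunctional
    (c : EuclideanSpace ℝ (Fin l) → (EuclideanSpace ℝ (Fin l) →L[ℝ] EuclideanSpace ℝ (Fin l)))
    (a : EuclideanSpace ℝ (Fin l) → EuclideanSpace ℝ (Fin l)) (m : EuclideanSpace ℝ (Fin l) → ℝ)
    (Dm : EuclideanSpace ℝ (Fin l) → EuclideanSpace ℝ (Fin l)) : ℝ≥0∞ :=
  ⨆ h : {h : EuclideanSpace ℝ (Fin l) → ℝ // ContDiff ℝ 1 h ∧ HasCompactSupport h},
    ENNReal.ofReal (∫ x, (⟪gradient h.1 x,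
      (1 / 2 : ℝ) • (m x • matDiv c x + c x (Dm x)) - m x • a x⟫ -
        1 / 2 * ⟪c x (gradient h.1 x), gradient h.1 x⟫ * m x))

/-- The hypotheses on the coefficients at a fixed time: `c` is a symmetric field of class `C¹`,
elliptic with constant `θ`, whose derivative is bounded by `Kc` and `Kc`-Lipschitz, and `a` is
`Ka`-Lipschitz with `‖a 0‖ ≤ Ca`. -/
structure IsRegularCoefficients (θ : ℝ) (Kc Ka Ca : ℝ≥0)
    (c : EuclideanSpace ℝ (Fin l) → (EuclideanSpace ℝ (Fin l) →L[ℝ] EuclideanSpace ℝ (Fin l)))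
    (a : EuclideanSpace ℝ (Fin l) → EuclideanSpace ℝ (Fin l)) : Prop where
  symm : ∀ x y y', ⟪c x y, y'⟫ = ⟪y, c x y'⟫
  elliptic : ∀ x y, θ * ‖y‖ ^ 2 ≤ ⟪c x y, y⟫ ∧ ⟪c x y, y⟫ ≤ θ⁻¹ * ‖y‖ ^ 2
  contDiff : ContDiff ℝ 1 c
  norm_fderiv_le : ∀ x, ‖fderiv ℝ c x‖ ≤ Kc
  lipschitz_fderiv : LipschitzWith Kc (fderiv ℝ c)
  lipschitz : LipschitzWith Ka a
  norm_zero_le : ‖a 0‖ ≤ Ca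

/-- The vector field `b` for which `½ div(c m) - a m = ½ c Dm + m b`. -/
noncomputable def drift
    (c : EuclideanSpace ℝ (Fin l) → (EuclideanSpace ℝ (Fin l) →L[ℝ] EuclideanSpace ℝ (Fin l)))
    (a : EuclideanSpace ℝ (Fin l) → EuclideanSpace ℝ (Fin l)) (x : EuclideanSpace ℝ (Fin l)) :
    EuclideanSpace ℝ (Fin l) :=
  (1 / 2 : ℝ) • matDiv c x - a x

variable {θ : ℝ} {Kc Ka Ca : ℝ≥0} {m : EuclideanSpace ℝ (Fin l) → ℝ}
  {c : EuclideanSpace ℝ (Fin l) → (EuclideanSpace ℝ (Fin l) →L[ℝ] EuclideanSpace ℝ (Fin l))}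
  {a Dm : EuclideanSpace ℝ (Fin l) → EuclideanSpace ℝ (Fin l)}

theorem half_smul_matDiv_sub_eq_flux_drift (x : EuclideanSpace ℝ (Fin l)) :
    (1 / 2 : ℝ) • (m x • matDiv c x + c x (Dm x)) - m x • a x = flux c (drift c a) m Dm x := by
  rw [flux, drift]
  module

theorem isVariationalBound_toReal_variationalFunctional
    (h : variationalFunctional c a m Dm ≠ ⊤) :
    IsVariationalBound volume c (flux c (drift c a) m Dm) m
      (variationalFunctional c a m Dm).toReal := fun k hk hk' ↦ by
  have hsup := le_iSup (fun h : {h : EuclideanSpace ℝ (Fin l) → ℝ //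
    ContDiff ℝ 1 h ∧ HasCompactSupport h} ↦ ENNReal.ofReal (∫ x, (⟪gradient h.1 x,
      (1 / 2 : ℝ) • (m x • matDiv c x + c x (Dm x)) - m x • a x⟫ -
        1 / 2 * ⟪c x (gradient h.1 x), gradient h.1 x⟫ * m x))) ⟨k, hk, hk'⟩
  simp only [half_smul_matDiv_sub_eq_flux_drift] at hsup
  refine (ENNReal.ofReal_le_iff_le_toReal h).1 (hsup.trans_eq ?_)
  simp only [variationalFunctional, half_smul_matDiv_sub_eq_flux_drift]

namespace IsRegularCoefficients

theorem isEllipticField (h : IsRegularCoefficients θ Kc Ka Ca c a) (hθ : 0 < θ) :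
    IsEllipticField θ Kc c where
  pos := hθ
  symm := h.symm
  lower x y := (h.elliptic x y).1
  upper x y := (h.elliptic x y).2
  lipschitz := lipschitzWith_of_nnnorm_fderiv_le (h.contDiff.differentiable one_ne_zero)
    h.norm_fderiv_le

theorem lipschitzWith_drift (h : IsRegularCoefficients θ Kc Ka Ca c a) :
    LipschitzWith (l * Kc + Ka) (drift c a) := by
  have hdiv : LipschitzWith (l * Kc) fun x ↦ (1 / 2 : ℝ) • matDiv c x :=
    ((lipschitzWith_smul (1 / 2 : ℝ)).comp (lipschitzWith_matDiv h.lipschitz_fderiv)).weaken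
      (mul_le_of_le_one_left' (by norm_num))
  exact hdiv.sub h.lipschitz

theorem norm_drift_le (h : IsRegularCoefficients θ Kc Ka Ca c a) (x : EuclideanSpace ℝ (Fin l)) :
    ‖drift c a x‖ ≤ (l * Kc + Ka + Ca : ℝ) * (1 + ‖x‖) := by
  have hdiv : ‖(1 / 2 : ℝ) • matDiv c x‖ ≤ l * Kc := by
    rw [norm_smul]
    exact (mul_le_of_le_one_left (norm_nonneg _) (by norm_num)).trans
      (norm_matDiv_le h.norm_fderiv_le x)
  have ha : ‖a x‖ ≤ Ka * ‖x‖ + Ca := by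
    have hlip := h.lipschitz.norm_sub_le x 0
    rw [sub_zero] at hlip
    linarith [norm_le_norm_add_norm_sub' (a x) (a 0), h.norm_zero_le]
  calc ‖drift c a x‖ ≤ l * Kc + (Ka * ‖x‖ + Ca) := norm_sub_le_of_le hdiv ha
    _ ≤ l * Kc + (Ka * ‖x‖ + Ca) + (l * Kc * ‖x‖ + Ka + Ca * ‖x‖) :=
      le_add_of_nonneg_right (by positivity)
    _ = (l * Kc + Ka + Ca : ℝ) * (1 + ‖x‖) := by ring

theorem fisherInformation_le (h : IsRegularCoefficients θ Kc Ka Ca c a) (hθ : 0 < θ)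
    (hw : HasWeakGrad m Dm) (hm0 : ∀ x, 0 ≤ m x) (hmi : Integrable m)
    (hJ : LocallyIntegrable fun x ↦ ‖Dm x‖ ^ 2 / m x) :
    fisherInformation volume m Dm ≤
      ENNReal.ofReal (16 / θ ^ 3) * (variationalFunctional c a m Dm +
        ENNReal.ofReal (energyRate l θ Kc (l * Kc + Ka) (l * Kc + Ka + Ca) * ∫ x, m x)) := by
  have hθ3 : 0 < 16 / θ ^ 3 := by positivity
  have hmass : 0 ≤ ∫ x, m x := integral_nonneg hm0
  rcases eq_or_ne (variationalFunctional c a m Dm) ⊤ with htop | hfin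
  · rw [htop, top_add, ENNReal.mul_top (ENNReal.ofReal_pos.2 hθ3).ne']
    exact le_top
  · refine ((isVariationalBound_toReal_variationalFunctional hfin).fisherInformation_le
      (h.isEllipticField hθ) h.lipschitzWith_drift h.norm_drift_le hw hm0 hmi hJ).trans_eq ?_
    rw [ENNReal.ofReal_mul hθ3.le, ENNReal.ofReal_add ENNReal.toReal_nonneg
      (by rw [energyRate]; positivity), ENNReal.ofReal_toReal hfin]
    push_cast
    rfl

end IsRegularCoefficients

end RegularCoefficients

section TimeIntegral

theorem locallyIntegrable_of_lintegral_ball_lt_top {E : Type*} [SeminormedAddCommGroup E]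
    [MeasurableSpace E] {μ : Measure E} {f : E → ℝ} (hf : AEStronglyMeasurable f μ)
    (hf0 : ∀ x, 0 ≤ f x)
    (h : ∀ n : ℕ, ∫⁻ x in Metric.ball 0 n, ENNReal.ofReal (f x) ∂μ < ⊤) :
    LocallyIntegrable f μ := fun x ↦ by
  obtain ⟨n, hn⟩ := exists_nat_gt ‖x‖
  refine ⟨Metric.ball 0 n, Metric.isOpen_ball.mem_nhds (by simpa using hn), hf.restrict, ?_⟩
  rw [hasFiniteIntegral_iff_ofReal (Eventually.of_forall hf0)]
  exact h n

theorem ae_locallyIntegrable_of_lintegral_ball_lt_top {T E : Type*} [MeasurableSpace T]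
    [SeminormedAddCommGroup E] [MeasurableSpace E] {ν : Measure T} {μ : Measure E} [SFinite μ]
    {f : T × E → ℝ} (hf : Measurable f) (hf0 : ∀ᵐ s ∂ν, ∀ x, 0 ≤ f (s, x))
    (h : ∀ n : ℕ, ∫⁻ s, ∫⁻ x in Metric.ball 0 n, ENNReal.ofReal (f (s, x)) ∂μ ∂ν < ⊤) :
    ∀ᵐ s ∂ν, LocallyIntegrable (fun x ↦ f (s, x)) μ := by
  filter_upwards [hf0, ae_all_iff.2 fun n ↦
    ae_lt_top hf.ennreal_ofReal.lintegral_prod_right' (h n).ne] with s hs hfin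
  exact locallyIntegrable_of_lintegral_ball_lt_top
    (hf.comp measurable_prodMk_left).aestronglyMeasurable hs hfin

theorem global_energy_bound_general (l : ℕ) {T : Type*} [MeasurableSpace T] (ν : Measure T)
    [IsFiniteMeasure ν] (θ : ℝ) (L₁ Kc Ka Ca : ℝ≥0) (hθ : 0 < θ) :
    ∃ L₂ : ℝ, 0 < L₂ ∧
      ∀ (c : T → EuclideanSpace ℝ (Fin l) →
            (EuclideanSpace ℝ (Fin l) →L[ℝ] EuclideanSpace ℝ (Fin l)))
        (a : T → EuclideanSpace ℝ (Fin l) → EuclideanSpace ℝ (Fin l))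
        (m : T → EuclideanSpace ℝ (Fin l) → ℝ)
        (Dm : T → EuclideanSpace ℝ (Fin l) → EuclideanSpace ℝ (Fin l)),
        (∀ᵐ s ∂ν, IsRegularCoefficients θ Kc Ka Ca (c s) (a s)) →
        (∀ᵐ s ∂ν, (∀ x, 0 ≤ m s x) ∧ (∫ x, m s x) = 1 ∧ HasWeakGrad (m s) (Dm s)) →
        (∀ᵐ s ∂ν, LocallyIntegrable fun x ↦ ‖Dm s x‖ ^ 2 / m s x) →
        ∫⁻ s, variationalFunctional (c s) (a s) (m s) (Dm s) ∂ν ≤ L₁ →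
        ∫⁻ s, fisherInformation volume (m s) (Dm s) ∂ν ≤ ENNReal.ofReal L₂ := by
  set A := ENNReal.ofReal (16 / θ ^ 3)
  set R := ENNReal.ofReal (energyRate l θ Kc (l * Kc + Ka) (l * Kc + Ka + Ca))
  have hfin : A * (L₁ + R * ν univ) ≠ ⊤ := by finiteness
  refine ⟨(A * (L₁ + R * ν univ)).toReal + 1, by positivity, fun c a m Dm hcoef hm hJ hL ↦ ?_⟩
  calc ∫⁻ s, fisherInformation volume (m s) (Dm s) ∂ν
      ≤ ∫⁻ s, A * (variationalFunctional (c s) (a s) (m s) (Dm s) + R) ∂ν :=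
        lintegral_mono_ae <| by
          filter_upwards [hcoef, hm, hJ] with s hcs ⟨hms, hms1, hws⟩ hJs
          simpa only [hms1, mul_one] using hcs.fisherInformation_le hθ hws hms
            (integrable_of_integral_eq_one hms1) hJs
    _ = A * (∫⁻ s, variationalFunctional (c s) (a s) (m s) (Dm s) ∂ν + R * ν univ) := by
        rw [lintegral_const_mul' _ _ ENNReal.ofReal_ne_top,
          lintegral_add_right _ measurable_const, lintegral_const]
    _ ≤ A * (L₁ + R * ν univ) := by gcongr
    _ ≤ ENNReal.ofReal ((A * (L₁ + R * ν univ)).toReal + 1) := by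
        rw [← ENNReal.ofReal_toReal hfin]
        exact ENNReal.ofReal_le_ofReal (by simp)

end TimeIntegral

/-- Lemma `le:kwadr_int` of the paper: if the Fisher-information-type variational
functional is bounded by `L₁`, the local integrability of `|Dm|²/m` upgrades to a global
bound `L₂` depending only on `L₁`, `t`, the ellipticity constant `θ` and the bounds and
Lipschitz constants `Kc`, `Ka`, `Ca` of the coefficients. -/
theorem global_energy_bound
    (l : ℕ) (t θ L₁ Kc Ka Ca : ℝ)
    (ht : 0 < t) (hθ0 : 0 < θ) (hθ1 : θ ≤ 1) (hL₁ : 0 < L₁)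
    (hKc : 0 ≤ Kc) (hKa : 0 ≤ Ka) (hCa : 0 ≤ Ca) :
    ∃ L₂ : ℝ, 0 < L₂ ∧
      ∀ (c : ℝ → EuclideanSpace ℝ (Fin l) →
            (EuclideanSpace ℝ (Fin l) →L[ℝ] EuclideanSpace ℝ (Fin l)))
        (a : ℝ → EuclideanSpace ℝ (Fin l) → EuclideanSpace ℝ (Fin l))
        (m : ℝ → EuclideanSpace ℝ (Fin l) → ℝ)
        (Dm : ℝ → EuclideanSpace ℝ (Fin l) → EuclideanSpace ℝ (Fin l)),
        -- measurability of the coefficients and of the density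
        (∀ y, Measurable (fun p : ℝ × EuclideanSpace ℝ (Fin l) => (c p.1 p.2) y)) →
        (Measurable (fun p : ℝ × EuclideanSpace ℝ (Fin l) => a p.1 p.2)) →
        (Measurable (fun p : ℝ × EuclideanSpace ℝ (Fin l) => m p.1 p.2)) →
        (Measurable (fun p : ℝ × EuclideanSpace ℝ (Fin l) => Dm p.1 p.2)) →
        -- symmetry and uniform ellipticity of `c`
        (∀ s ∈ Set.Icc (0 : ℝ) t, ∀ x y y', ⟪c s x y, y'⟫ = ⟪y, c s x y'⟫) →
        (∀ s ∈ Set.Icc (0 : ℝ) t, ∀ x y,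
          θ * ‖y‖ ^ 2 ≤ ⟪c s x y, y⟫ ∧ ⟪c s x y, y⟫ ≤ θ⁻¹ * ‖y‖ ^ 2) →
        -- `c_s` of class `C¹` with first derivatives bounded and Lipschitz uniformly in `s`
        (∀ s ∈ Set.Icc (0 : ℝ) t, ContDiff ℝ 1 (c s)) →
        (∀ s ∈ Set.Icc (0 : ℝ) t, ∀ x, ‖fderiv ℝ (c s) x‖ ≤ Kc) →
        (∀ s ∈ Set.Icc (0 : ℝ) t, LipschitzWith (Real.toNNReal Kc) (fderiv ℝ (c s))) →
        -- `a_s` Lipschitz uniformly in `s`, with `sup_s |a_s(0)| < ∞`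
        (∀ s ∈ Set.Icc (0 : ℝ) t, LipschitzWith (Real.toNNReal Ka) (a s)) →
        (∀ s ∈ Set.Icc (0 : ℝ) t, ‖a s 0‖ ≤ Ca) →
        -- `m_s` a probability density of class `W^{1,1}_loc` for a.e. `s`
        (∀ᵐ s ∂(volume.restrict (Set.Icc (0 : ℝ) t)),
          (∀ x, 0 ≤ m s x) ∧ (∫ x, m s x) = 1 ∧ HasWeakGrad (m s) (Dm s)) →
        -- local square integrability of `Dm/√m`
        (∀ (x₀ : EuclideanSpace ℝ (Fin l)) (r : ℝ),
          (∫⁻ s in Set.Icc (0 : ℝ) t,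
            ∫⁻ x in Metric.ball x₀ r, ENNReal.ofReal (‖Dm s x‖ ^ 2 / m s x)) < ⊤) →
        -- the variational functional is bounded by `L₁`
        ((∫⁻ s in Set.Icc (0 : ℝ) t,
          ⨆ h : {h : EuclideanSpace ℝ (Fin l) → ℝ //
              ContDiff ℝ 1 h ∧ HasCompactSupport h},
            ENNReal.ofReal (∫ x,
              (⟪gradient h.1 x,
                  ((1 : ℝ) / 2) • (m s x • matDiv (c s) x + (c s x) (Dm s x)) -
                    m s x • a s x⟫ -
                (1 / 2) * ⟪(c s x) (gradient h.1 x), gradient h.1 x⟫ * m s x))) ≤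
          ENNReal.ofReal L₁) →
        (∫⁻ s in Set.Icc (0 : ℝ) t,
          ∫⁻ x, ENNReal.ofReal (‖Dm s x‖ ^ 2 / m s x)) ≤ ENNReal.ofReal L₂ := by
  obtain ⟨L₂, hL₂, h⟩ := global_energy_bound_general l (volume.restrict (Icc 0 t)) θ
    L₁.toNNReal Kc.toNNReal Ka.toNNReal Ca.toNNReal hθ0
  refine ⟨L₂, hL₂, fun c a m Dm _ _ hm hDm hsymm hell hc hc' hcL ha ha0 hmw hJ hL ↦ ?_⟩
  have hcoef : ∀ᵐ s ∂volume.restrict (Icc 0 t),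
      IsRegularCoefficients θ Kc.toNNReal Ka.toNNReal Ca.toNNReal (c s) (a s) :=
    ae_restrict_of_forall_mem measurableSet_Icc fun s hs ↦
      { symm := hsymm s hs
        elliptic := hell s hs
        contDiff := hc s hs
        norm_fderiv_le := fun x ↦ (hc' s hs x).trans (Real.le_coe_toNNReal Kc)
        lipschitz_fderiv := hcL s hs
        lipschitz := ha s hs
        norm_zero_le := (ha0 s hs).trans (Real.le_coe_toNNReal Ca) }
  have hloc : ∀ᵐ s ∂volume.restrict (Icc 0 t), LocallyIntegrable fun x ↦ ‖Dm s x‖ ^ 2 / m s x :=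
    ae_locallyIntegrable_of_lintegral_ball_lt_top ((hDm.norm.pow_const 2).div hm)
      (hmw.mono fun s hs x ↦ div_nonneg (sq_nonneg _) (hs.1 x)) fun n ↦ hJ 0 n
  exact h c a m Dm hcoef hmw hloc hL
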